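/- arXiv:1307.6192 — 6 statements merged into one kernel-verified Lean document; each statement's English description precedes it below -/
import Mathlib

section
/- For every positive integer n there exists a 321-avoiding permutation ρ of length n² such that every 321-avoiding permutation of length n is contained in ρ as a pattern (i.e., ρ is a proper n-universal permutation for the set of 321-avoiding permutations). -/
/-- A permutation of length `n` (a bijection of `Fin n`) is 321-avoiding if there are
no positions `i < j < k` with `π i > π j > π k`. -/
def Avoids321 {n : ℕ} (π : Equiv.Perm (Fin n)) : Prop :=
  ¬ ∃ i j k : Fin n, i < j ∧ j < k ∧ π k < π j ∧ π j < π i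

/-- `π` contains `σ` as a pattern: there is a strictly increasing choice of positions
in `π` whose entries are order-isomorphic to `σ`. -/
def HasPattern {n k : ℕ} (π : Equiv.Perm (Fin n)) (σ : Equiv.Perm (Fin k)) : Prop :=
  ∃ f : Fin k → Fin n, StrictMono f ∧ ∀ a b : Fin k, σ a < σ b ↔ π (f a) < π (f b)

/-!
Arrange cells `0, 1, 2, …` in an ascending staircase, each odd cell to the right of its predecessor
and each even cell above it, and put points at heights `0, 1, 2, …` in every cell. An inversion
always leads from an even cell to an odd one, so these diagrams avoid `321`. Conversely, the
left-to-right maxima of a `321`-avoiding permutation and its remaining entries both form increasing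
sequences, and a pointwise minimal labelling that is even exactly on the left-to-right maxima and
increases along southwest pairs of opposite parity grids the permutation on the staircase. The
comparisons of heights that the gridding forces are acyclic, so `n` cells with `n` heights each
suffice.
-/

theorem exists_nat_lt_card_of_wellFounded {α : Type*} [Fintype α] {r : α → α → Prop}
    (hr : WellFounded r) :
    ∃ f : α → ℕ, (∀ a, f a < Fintype.card α) ∧ ∀ a b, r a b → f a < f b := by
  classical
  have hirrefl : ∀ a, ¬ Relation.TransGen r a a := fun a => hr.transGen.irrefl.irrefl a
  refine ⟨fun a => Finset.card {z | Relation.TransGen r z a}, fun a => ?_, fun a b hab => ?_⟩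
  · exact Finset.card_lt_univ_of_notMem (x := a) (by simp [hirrefl])
  · refine Finset.card_lt_card (Finset.ssubset_iff_exists_subset_erase.2 ⟨a, ?_, fun z hz => ?_⟩)
    · simpa using Relation.TransGen.single hab
    · simp only [Finset.mem_filter_univ, Finset.mem_erase] at hz ⊢
      exact ⟨fun h => hirrefl a (h ▸ hz), hz.tail hab⟩

theorem exists_isLeast_fiber {α ι : Type*} [LinearOrder α] [Finite α] (f : α → ι) {S : Set α}
    {a : α} (ha : a ∈ S) : ∃ z, IsLeast {w ∈ S | f w = f a} z := by
  obtain ⟨z, hz, hmin⟩ :=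
    Set.exists_min_image {w ∈ S | f w = f a} id (Set.toFinite _) ⟨a, ha, rfl⟩
  exact ⟨z, hz, hmin⟩

section Diagram

variable {α β γ : Type*} [LinearOrder β] [LinearOrder γ] {N : ℕ}
  {ρ : Equiv.Perm (Fin N)} {e : Fin N ≃ α} {x : α → β} {y : α → γ}

/-- `ρ` is read off the points of `α`, drawn in the plane with horizontal coordinate `x` and
vertical coordinate `y`; the point at position `i` is `e i`. Only the relative order of the
coordinates matters, so they may lie in any linear orders. -/
structure IsDiagram (ρ : Equiv.Perm (Fin N)) (e : Fin N ≃ α) (x : α → β) (y : α → γ) : Prop where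
  pos_lt_iff : ∀ i j, x (e i) < x (e j) ↔ i < j
  val_lt_iff : ∀ i j, y (e i) < y (e j) ↔ ρ i < ρ j

theorem exists_equiv_fin_of_injective [Fintype α] (hN : Fintype.card α = N)
    (hx : Function.Injective x) : ∃ e : Fin N ≃ α, ∀ i j, x (e i) < x (e j) ↔ i < j :=
  let _ : LinearOrder α := LinearOrder.lift' x hx
  let e := monoEquivOfFin α hN
  ⟨e.toEquiv, fun _ _ => e.lt_iff_lt⟩

theorem exists_isDiagram [Fintype α] (hN : Fintype.card α = N) (hx : Function.Injective x)
    (hy : Function.Injective y) :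
    ∃ (ρ : Equiv.Perm (Fin N)) (e : Fin N ≃ α), IsDiagram ρ e x y := by
  obtain ⟨e, he⟩ := exists_equiv_fin_of_injective hN hx
  obtain ⟨e', he'⟩ := exists_equiv_fin_of_injective hN hy
  exact ⟨e.trans e'.symm, e, he, fun i j => by simp [← he']⟩

theorem IsDiagram.avoids321 (hρ : IsDiagram ρ e x y) {P : α → Prop}
    (hP : ∀ p q, x p < x q → y q < y p → P p ∧ ¬ P q) : Avoids321 ρ := by
  rintro ⟨i, j, k, hij, hjk, hkj, hji⟩
  have hj_not : ¬ P (e j) :=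
    (hP _ _ ((hρ.pos_lt_iff i j).2 hij) ((hρ.val_lt_iff j i).2 hji)).2
  exact hj_not (hP _ _ ((hρ.pos_lt_iff j k).2 hjk) ((hρ.val_lt_iff k j).2 hkj)).1

theorem IsDiagram.hasPattern (hρ : IsDiagram ρ e x y) {k : ℕ} {π : Equiv.Perm (Fin k)}
    {g : Fin k → α} (hx : ∀ a b, a < b → x (g a) < x (g b))
    (hy : ∀ a b, π a < π b → y (g a) < y (g b)) : HasPattern ρ π := by
  refine ⟨fun a => e.symm (g a), fun a b hab => ?_, fun a b => ?_⟩
  · simpa [← hρ.pos_lt_iff] using hx a b hab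
  · have hmono : StrictMono fun v => y (g (π.symm v)) := fun u v huv => hy _ _ (by simpa using huv)
    simpa [← hρ.val_lt_iff] using (hmono.lt_iff_lt (a := π a) (b := π b)).symm

end Diagram

section Staircase

/-- The horizontal coordinate of the point at height `h` in cell `c` of the staircase: cells
`2k - 1` and `2k` share column `k`, ordered there by height, the even cell first at equal height. -/
def columnKey (c h : ℕ) : ℕ ×ₗ ℕ := toLex ((c + 1) / 2, 2 * h + c % 2)

/-- The vertical coordinate of the point at height `h` in cell `c` of the staircase: cells
`2k` and `2k + 1` share row `k`, ordered there by height, the even cell first at equal height. -/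
def rowKey (c h : ℕ) : ℕ ×ₗ ℕ := toLex (c / 2, 2 * h + c % 2)

theorem columnKey_lt_columnKey_iff {c h c' h' : ℕ} : columnKey c h < columnKey c' h' ↔
    (c + 1) / 2 < (c' + 1) / 2 ∨
      (c + 1) / 2 = (c' + 1) / 2 ∧ 2 * h + c % 2 < 2 * h' + c' % 2 :=
  Prod.Lex.toLex_lt_toLex

theorem rowKey_lt_rowKey_iff {c h c' h' : ℕ} : rowKey c h < rowKey c' h' ↔
    c / 2 < c' / 2 ∨ c / 2 = c' / 2 ∧ 2 * h + c % 2 < 2 * h' + c' % 2 :=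
  Prod.Lex.toLex_lt_toLex

theorem columnKey_injective (m k : ℕ) :
    Function.Injective fun p : Fin m × Fin k => columnKey p.1 p.2 := by
  intro p q hpq
  simp only [columnKey, EmbeddingLike.apply_eq_iff_eq, Prod.mk.injEq] at hpq
  exact Prod.ext (Fin.ext (by omega)) (Fin.ext (by omega))

theorem rowKey_injective (m k : ℕ) :
    Function.Injective fun p : Fin m × Fin k => rowKey p.1 p.2 := by
  intro p q hpq
  simp only [rowKey, EmbeddingLike.apply_eq_iff_eq, Prod.mk.injEq] at hpq
  exact Prod.ext (Fin.ext (by omega)) (Fin.ext (by omega))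

theorem even_and_not_even_of_columnKey_lt_of_rowKey_lt {c h c' h' : ℕ}
    (hcol : columnKey c h < columnKey c' h') (hrow : rowKey c' h' < rowKey c h) :
    Even c ∧ ¬ Even c' := by
  rw [columnKey_lt_columnKey_iff] at hcol
  rw [rowKey_lt_rowKey_iff] at hrow
  simp only [Nat.even_iff]
  omega

end Staircase

section Permutation

variable {n : ℕ} {π : Equiv.Perm (Fin n)} {a b : Fin n}

/-- The point of `π` at position `a` lies strictly to the left of and below the one at `b`. -/
def Southwest (π : Equiv.Perm (Fin n)) (a b : Fin n) : Prop := a < b ∧ π a < π b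

/-- The entry of `π` at position `a` is a left-to-right maximum. -/
def IsLeftToRightMax (π : Equiv.Perm (Fin n)) (a : Fin n) : Prop := ∀ b < a, π b < π a

theorem Southwest.trans {a b c : Fin n} (hab : Southwest π a b) (hbc : Southwest π b c) :
    Southwest π a c :=
  ⟨hab.1.trans hbc.1, hab.2.trans hbc.2⟩

theorem apply_lt_apply_of_lt_of_not_lt (hab : a < b) (h : ¬ π a < π b) : π b < π a :=
  (not_lt.1 h).lt_of_ne (π.injective.ne hab.ne')

theorem southwest_of_apply_lt (hab : π a < π b) (h : b < a → Southwest π b a) :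
    Southwest π a b := by
  rcases lt_trichotomy a b with hlt | rfl | hgt
  · exact ⟨hlt, hab⟩
  · exact absurd hab (lt_irrefl _)
  · exact absurd hab (h hgt).2.not_gt

theorem southwest_or_inversion_of_ne (hab : a ≠ b) :
    Southwest π a b ∨ Southwest π b a ∨ (a < b ∧ π b < π a) ∨ (b < a ∧ π a < π b) := by
  have hlt := lt_or_gt_of_ne hab
  have hlt' := lt_or_gt_of_ne (π.injective.ne hab)
  unfold Southwest
  tauto

theorem Avoids321.isLeftToRightMax_of_inversion (hπ : Avoids321 π) (hab : a < b)
    (hba : π b < π a) : IsLeftToRightMax π a ∧ ¬ IsLeftToRightMax π b := by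
  refine ⟨fun z hza => ?_, fun hb => hba.not_gt (hb a hab)⟩
  by_contra hz
  exact hπ ⟨z, a, b, hza, hab, hba, apply_lt_apply_of_lt_of_not_lt hza hz⟩

end Permutation

section Gridding

variable {n : ℕ} {π : Equiv.Perm (Fin n)} {c : Fin n → ℕ} {a b : Fin n}

/-- The assignment `c` of the points of `π` to cells is compatible with the staircase: each cell is
increasing, a cell lies to the left of the next one if it is even and below it if it is odd, and
cells further apart are comparable in both directions. -/
structure IsStaircaseGridding (π : Equiv.Perm (Fin n)) (c : Fin n → ℕ) : Prop where
  southwest_of_eq : ∀ a b, c a = c b → a < b → Southwest π a b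
  lt_of_even : ∀ a b, c b = c a + 1 → Even (c a) → a < b
  apply_lt_of_odd : ∀ a b, c b = c a + 1 → ¬ Even (c a) → π a < π b
  southwest_of_add_two_le : ∀ a b, c a + 2 ≤ c b → Southwest π a b

/-- A labelling of the points of `π` that is even exactly on the left-to-right maxima and increases
along southwest pairs of opposite parity. A pointwise minimal one is a staircase gridding if `π`
avoids `321`. -/
structure IsAlternatingLabelling (π : Equiv.Perm (Fin n)) (c : Fin n → ℕ) : Prop where
  even_iff : ∀ a, Even (c a) ↔ IsLeftToRightMax π a
  lt_of_southwest : ∀ a b, Southwest π a b → ¬ (Even (c a) ↔ Even (c b)) → c a < c b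

theorem exists_isAlternatingLabelling (π : Equiv.Perm (Fin n)) :
    ∃ c, IsAlternatingLabelling π c := by
  classical
  refine ⟨fun a => 2 * a + if IsLeftToRightMax π a then 0 else 1, fun a => ?_, fun a b hab _ => ?_⟩
  · split_ifs with ha <;> simp [ha]
  · have : (a : ℕ) < b := hab.1
    split_ifs <;> omega

theorem exists_southwest_eq_add_one_of_minimal (hc : Minimal (IsAlternatingLabelling π) c)
    (ha : 2 ≤ c a) : ∃ z, Southwest π z a ∧ c a = c z + 1 := by
  by_contra! hgap
  have hlower : IsAlternatingLabelling π (Function.update c a (c a - 2)) := by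
    have hparity : ∀ z, Even (Function.update c a (c a - 2) z) ↔ Even (c z) := by
      intro z
      rcases eq_or_ne z a with rfl | hz
      · simp [Nat.even_sub ha]
      · simp [hz]
    refine ⟨fun z => (hparity z).trans (hc.prop.even_iff z), fun z w hzw hne => ?_⟩
    rw [hparity, hparity] at hne
    have hlt := hc.prop.lt_of_southwest z w hzw hne
    rcases eq_or_ne w a with rfl | hw
    · have hgap_z := hgap z hzw
      simp only [Function.update_self, Function.update_of_ne hzw.1.ne]
      simp only [Nat.even_iff] at hne
      omega
    · rcases eq_or_ne z a with rfl | hz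
      · simp only [Function.update_self, Function.update_of_ne hw]
        omega
      · simpa only [Function.update_of_ne hz, Function.update_of_ne hw]
  exact hc.not_prop_of_lt (update_lt_self_iff.2 (by omega)) hlower

theorem label_le_val_of_minimal (hc : Minimal (IsAlternatingLabelling π) c) (a : Fin n) :
    c a ≤ a := by
  induction a using WellFoundedLT.induction with
  | ind a ih =>
    rcases Nat.lt_or_ge (c a) 2 with hlt | hge
    · rcases Nat.eq_zero_or_pos (c a) with hzero | hpos
      · omega
      · have hodd : ¬ Even (c a) := by rw [Nat.even_iff]; omega
        rw [hc.prop.even_iff, IsLeftToRightMax] at hodd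
        push Not at hodd
        obtain ⟨z, hza, -⟩ := hodd
        omega
    · obtain ⟨z, hza, hz⟩ := exists_southwest_eq_add_one_of_minimal hc hge
      have := ih z hza.1
      have := hza.1
      omega

theorem IsAlternatingLabelling.even_and_not_even_of_inversion (hc : IsAlternatingLabelling π c)
    (hπ : Avoids321 π) (hab : a < b) (hba : π b < π a) : Even (c a) ∧ ¬ Even (c b) := by
  simpa only [hc.even_iff] using hπ.isLeftToRightMax_of_inversion hab hba

theorem IsAlternatingLabelling.southwest_of_lt (hc : IsAlternatingLabelling π c)
    (hπ : Avoids321 π) (hab : a < b) (heven : Even (c a) ↔ Even (c b)) : Southwest π a b := by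
  refine ⟨hab, ?_⟩
  by_contra h
  have := hc.even_and_not_even_of_inversion hπ hab (apply_lt_apply_of_lt_of_not_lt hab h)
  tauto

theorem label_le_of_southwest_of_minimal (hc : Minimal (IsAlternatingLabelling π) c)
    (hab : Southwest π a b) : c a ≤ c b := by
  by_cases heven : Even (c a) ↔ Even (c b)
  · rcases Nat.lt_or_ge (c a) 2 with hlt | hge
    · simp only [Nat.even_iff] at heven
      omega
    · obtain ⟨z, hza, hz⟩ := exists_southwest_eq_add_one_of_minimal hc hge
      have := hc.prop.lt_of_southwest z b (hza.trans hab) (by simp only [Nat.even_iff] at *; omega)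
      omega
  · exact (hc.prop.lt_of_southwest a b hab heven).le

theorem label_right_le_of_inversion (hπ : Avoids321 π)
    (hc : Minimal (IsAlternatingLabelling π) c) (hab : a < b) (hba : π b < π a) :
    c b ≤ c a + 1 := by
  have hparity := hc.prop.even_and_not_even_of_inversion hπ hab hba
  rcases Nat.lt_or_ge (c b) 2 with hlt | hge
  · omega
  · obtain ⟨z, hzb, hz⟩ := exists_southwest_eq_add_one_of_minimal hc hge
    have heven : Even (c z) ↔ Even (c a) := by simp only [Nat.even_iff] at *; omega
    have hza : Southwest π z a := southwest_of_apply_lt (hzb.2.trans hba) fun haz =>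
      hc.prop.southwest_of_lt hπ haz heven.symm
    have := label_le_of_southwest_of_minimal hc hza
    omega

theorem label_left_le_of_inversion (hπ : Avoids321 π)
    (hc : Minimal (IsAlternatingLabelling π) c) (hab : a < b) (hba : π b < π a) :
    c a ≤ c b + 1 := by
  have hparity := hc.prop.even_and_not_even_of_inversion hπ hab hba
  rcases Nat.lt_or_ge (c a) 2 with hlt | hge
  · omega
  · obtain ⟨z, hza, hz⟩ := exists_southwest_eq_add_one_of_minimal hc hge
    have heven : Even (c z) ↔ Even (c b) := by simp only [Nat.even_iff] at *; omega
    have hzb : Southwest π z b := hc.prop.southwest_of_lt hπ (hza.1.trans hab) heven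
    have := label_le_of_southwest_of_minimal hc hzb
    omega

theorem isStaircaseGridding_of_minimal (hπ : Avoids321 π)
    (hc : Minimal (IsAlternatingLabelling π) c) : IsStaircaseGridding π c := by
  have hcases : ∀ a b, c a < c b →
      Southwest π a b ∨ (a < b ∧ π b < π a) ∨ (b < a ∧ π a < π b) := by
    intro a b hab
    have hnot : ¬ Southwest π b a := fun hba => (label_le_of_southwest_of_minimal hc hba).not_gt hab
    have := southwest_or_inversion_of_ne (π := π) (ne_of_apply_ne c hab.ne)
    tauto
  refine ⟨fun a b hab hlt => ?_, fun a b hab ha => ?_, fun a b hab ha => ?_, fun a b hab => ?_⟩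
  · exact hc.prop.southwest_of_lt hπ hlt (by rw [hab])
  · rcases hcases a b (by omega) with hsw | ⟨hlt, -⟩ | ⟨hlt, hinv⟩
    · exact hsw.1
    · exact hlt
    · exact absurd ha (hc.prop.even_and_not_even_of_inversion hπ hlt hinv).2
  · rcases hcases a b (by omega) with hsw | ⟨hlt, hinv⟩ | ⟨-, hval⟩
    · exact hsw.2
    · exact absurd (hc.prop.even_and_not_even_of_inversion hπ hlt hinv).1 ha
    · exact hval
  · rcases hcases a b (by omega) with hsw | ⟨hlt, hinv⟩ | ⟨hlt, hinv⟩
    · exact hsw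
    · have := label_right_le_of_inversion hπ hc hlt hinv
      omega
    · have := label_left_le_of_inversion hπ hc hlt hinv
      omega

theorem Avoids321.exists_isStaircaseGridding (hπ : Avoids321 π) :
    ∃ c : Fin n → ℕ, IsStaircaseGridding π c ∧ ∀ a, c a < n := by
  obtain ⟨c, hc⟩ := exists_minimal_of_wellFoundedLT _ (exists_isAlternatingLabelling π)
  exact ⟨c, isStaircaseGridding_of_minimal hπ hc,
    fun a => (label_le_val_of_minimal hc a).trans_lt a.2⟩

end Gridding

section Heights

variable {n : ℕ} {π : Equiv.Perm (Fin n)} {c : Fin n → ℕ} {a b : Fin n}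

/-- The comparisons of heights forced by the cells `c`: the point `a` must be placed lower in its
cell than `b` is in its own. Only points in the same or in consecutive cells are compared. -/
def ForcedLower (π : Equiv.Perm (Fin n)) (c : Fin n → ℕ) (a b : Fin n) : Prop :=
  (c a = c b ∧ a < b) ∨ (c b = c a + 1 ∧ Southwest π a b) ∨ (c a = c b + 1 ∧ ¬ Southwest π b a)

-- A minimal element of a set is the first point of the lowest cell whose first point lies
-- southwest of everything in the next cell.
theorem wellFounded_forcedLower (hc : ∀ a b, c a = c b → a < b → Southwest π a b) :
    WellFounded (ForcedLower π c) := by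
  rw [WellFounded.wellFounded_iff_has_min]
  intro S hS
  let T := {a | IsLeast {w ∈ S | c w = c a} a ∧ ∀ w ∈ S, c w = c a + 1 → Southwest π a w}
  have hT : T.Nonempty := by
    obtain ⟨t, htS, ht⟩ := Set.exists_max_image S c (Set.toFinite _) hS
    obtain ⟨z, hz⟩ := exists_isLeast_fiber c htS
    have hzt : c z = c t := hz.1.2
    refine ⟨z, by rwa [hzt], fun w hwS hw => ?_⟩
    have := ht w hwS
    omega
  obtain ⟨a, ⟨hafirst, hanext⟩, hamin⟩ := Set.exists_min_image T c (Set.toFinite _) hT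
  refine ⟨a, hafirst.1.1, ?_⟩
  rintro b hbS (⟨heq, hlt⟩ | ⟨hsucc, hsw⟩ | ⟨hsucc, hsw⟩)
  · exact (hafirst.2 ⟨hbS, heq⟩).not_gt hlt
  · obtain ⟨z, hz⟩ := exists_isLeast_fiber c hbS
    have hzb : c z = c b := hz.1.2
    have hza : Southwest π z a := by
      rcases (hz.2 ⟨hbS, rfl⟩).eq_or_lt with rfl | hlt
      · exact hsw
      · exact (hc z b hzb hlt).trans hsw
    have hzT : z ∈ T := by
      refine ⟨by rwa [hzb], fun w hwS hw => ?_⟩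
      have hwa : c w = c a := by omega
      rcases (hafirst.2 ⟨hwS, hwa⟩).eq_or_lt with rfl | haw
      · exact hza
      · exact hza.trans (hc a w hwa.symm haw)
    have := hamin z hzT
    omega
  · exact hsw (hanext b hbS hsucc)

theorem columnKey_lt_of_lt (hc : IsStaircaseGridding π c) {h : Fin n → ℕ}
    (hh : ∀ a b, ForcedLower π c a b → h a < h b) (hab : a < b) :
    columnKey (c a) (h a) < columnKey (c b) (h b) := by
  rw [columnKey_lt_columnKey_iff]
  obtain hfar | hsucc | heq | hpred | hfar : c a + 2 ≤ c b ∨ c b = c a + 1 ∨ c a = c b ∨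
      c a = c b + 1 ∨ c b + 2 ≤ c a := by omega
  · omega
  · by_cases heven : Even (c a)
    · rw [Nat.even_iff] at heven
      omega
    · have := hh a b (.inr (.inl ⟨hsucc, hab, hc.apply_lt_of_odd a b hsucc heven⟩))
      rw [Nat.even_iff] at heven
      omega
  · have := hh a b (.inl ⟨heq, hab⟩)
    omega
  · have hodd : ¬ Even (c b) := fun heven => hab.not_gt (hc.lt_of_even b a hpred heven)
    have := hh a b (.inr (.inr ⟨hpred, fun hsw => hab.not_gt hsw.1⟩))
    rw [Nat.even_iff] at hodd
    omega
  · exact absurd (hc.southwest_of_add_two_le b a hfar).1 hab.not_gt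

theorem rowKey_lt_of_apply_lt (hc : IsStaircaseGridding π c) {h : Fin n → ℕ}
    (hh : ∀ a b, ForcedLower π c a b → h a < h b) (hab : π a < π b) :
    rowKey (c a) (h a) < rowKey (c b) (h b) := by
  rw [rowKey_lt_rowKey_iff]
  obtain hfar | hsucc | heq | hpred | hfar : c a + 2 ≤ c b ∨ c b = c a + 1 ∨ c a = c b ∨
      c a = c b + 1 ∨ c b + 2 ≤ c a := by omega
  · omega
  · by_cases heven : Even (c a)
    · have := hh a b (.inr (.inl ⟨hsucc, hc.lt_of_even a b hsucc heven, hab⟩))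
      rw [Nat.even_iff] at heven
      omega
    · rw [Nat.even_iff] at heven
      omega
  · have hsw := southwest_of_apply_lt hab (hc.southwest_of_eq b a heq.symm)
    have := hh a b (.inl ⟨heq, hsw.1⟩)
    omega
  · have heven : Even (c b) := by
      by_contra hodd
      exact hab.not_gt (hc.apply_lt_of_odd b a hpred hodd)
    have := hh a b (.inr (.inr ⟨hpred, fun hsw => hab.not_gt hsw.2⟩))
    rw [Nat.even_iff] at heven
    omega
  · exact absurd (hc.southwest_of_add_two_le b a hfar).2 hab.not_gt

theorem Avoids321.exists_staircase_coordinates (hπ : Avoids321 π) :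
    ∃ g : Fin n → Fin n × Fin n,
      (∀ a b, a < b → columnKey (g a).1 (g a).2 < columnKey (g b).1 (g b).2) ∧
      ∀ a b, π a < π b → rowKey (g a).1 (g a).2 < rowKey (g b).1 (g b).2 := by
  obtain ⟨c, hc, hcn⟩ := hπ.exists_isStaircaseGridding
  obtain ⟨h, hhn, hh⟩ :=
    exists_nat_lt_card_of_wellFounded (wellFounded_forcedLower hc.southwest_of_eq)
  simp only [Fintype.card_fin] at hhn
  exact ⟨fun a => (⟨c a, hcn a⟩, ⟨h a, hhn a⟩), fun _ _ => columnKey_lt_of_lt hc hh,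
    fun _ _ => rowKey_lt_of_apply_lt hc hh⟩

end Heights

/-- For every positive `n` there is a 321-avoiding permutation of length `n²` containing
every 321-avoiding permutation of length `n` as a pattern. -/
theorem exists_proper_universal_321_avoiding_permutation (n : ℕ) (hn : 0 < n) :
    ∃ ρ : Equiv.Perm (Fin (n ^ 2)), Avoids321 ρ ∧
      ∀ π : Equiv.Perm (Fin n), Avoids321 π → HasPattern ρ π := by
  have hcard : Fintype.card (Fin n × Fin n) = n ^ 2 := by simp [sq]
  obtain ⟨ρ, e, hρ⟩ := exists_isDiagram hcard (columnKey_injective n n) (rowKey_injective n n)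
  refine ⟨ρ, hρ.avoids321 (P := fun p => Even (p.1 : ℕ)) fun p q hcol hrow =>
    even_and_not_even_of_columnKey_lt_of_rowKey_lt hcol hrow, fun π hπ => ?_⟩
  obtain ⟨g, hcol, hrow⟩ := hπ.exists_staircase_coordinates
  exact hρ.hasPattern hcol hrow
end

section
/- For every positive integer n there exists a split permutation graph U with exactly 4n³ vertices such that every split permutation graph with n vertices is isomorphic to an induced subgraph of U. -/
/-- `S` is an independent set in `G`. -/
def IndepSet {V : Type*} (G : SimpleGraph V) (S : Set V) : Prop :=
  ∀ ⦃x⦄, x ∈ S → ∀ ⦃y⦄, y ∈ S → ¬ G.Adj x y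

/-- The vicinal quasi-order: `x ⊑ y` iff `N(x) ⊆ N(y) ∪ {y}`. -/
def VicinalLE {V : Type*} (G : SimpleGraph V) (x y : V) : Prop :=
  G.neighborSet x ⊆ G.neighborSet y ∪ {y}

/-- A set of vertices is a vicinal chain if its elements are pairwise comparable in
the vicinal quasi-order. -/
def VicinalChain {V : Type*} (G : SimpleGraph V) (S : Set V) : Prop :=
  ∀ ⦃x⦄, x ∈ S → ∀ ⦃y⦄, y ∈ S → VicinalLE G x y ∨ VicinalLE G y x

/-- A graph is threshold if its whole vertex set is a vicinal chain. -/
def IsThresholdGraph {V : Type*} (G : SimpleGraph V) : Prop :=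
  VicinalChain G Set.univ

/-- A split permutation graph: a split graph with clique `C` and independent set `I`
such that `C` splits into `C¹, C²` with `G[C¹ ∪ I]`, `G[C² ∪ I]` threshold, and `I`
splits into `I¹, I²` with `G[C ∪ I¹]`, `G[C ∪ I²]` threshold. -/
def IsSplitPermGraph {V : Type*} (G : SimpleGraph V) : Prop :=
  ∃ C I C1 C2 I1 I2 : Set V,
    C ∪ I = Set.univ ∧ Disjoint C I ∧
    G.IsClique C ∧ IndepSet G I ∧
    C1 ∪ C2 = C ∧ Disjoint C1 C2 ∧
    I1 ∪ I2 = I ∧ Disjoint I1 I2 ∧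
    IsThresholdGraph (G.induce (C1 ∪ I)) ∧ IsThresholdGraph (G.induce (C2 ∪ I)) ∧
    IsThresholdGraph (G.induce (C ∪ I1)) ∧ IsThresholdGraph (G.induce (C ∪ I2))

/-!
Give the vertices types in `ℤ/4`, even types for the clique and odd types for the independent set,
and integer heights. In the universal graph a clique vertex is joined to the independent vertices
of smaller height, except that between types `0` and `3` the heights are compared after a shift by
a constant `T`; winding `ℤ/4` around a helix of pitch `T`, this is one comparison rule for all pairs
of consecutive types.

In a split permutation graph, each vertex of the clique is determined up to twins by the numbers of
its neighbours in `I¹` and in `I²`, so the clique is a set of points in the plane covered by two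
chains. These chains can be chosen so that one lies northwest of the other, and they become the
types `0` and `2`. The adjacencies prescribe a linear order on the union of any two consecutive
types. Heights compatible with these orders are a potential for a system of difference constraints,
so they exist once every closed walk along the constraints has negative winding. A walk can be
shortened, by transitivity inside consecutive types, until it climbs the helix monotonically; a
closed walk that descends contradicts the position of the two chains. Taking longest paths as
heights with `T = n` keeps all heights below `n ^ 2`.
-/

section Potential

variable {V : Type*} {R : V → V → Prop} {w : V → V → ℤ}

/-- `WeightedWalk R w x y S`: some walk from `x` to `y` with at least one step, all of whose steps
are instances of `R`, has total `w`-weight `S`. -/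
inductive WeightedWalk (R : V → V → Prop) (w : V → V → ℤ) : V → V → ℤ → Prop
  | single {x y} : R x y → WeightedWalk R w x y (w x y)
  | tail {x y z S} : WeightedWalk R w x y S → R y z → WeightedWalk R w x z (S + w y z)

/-- `WeightedPath R w x A S`: some path (a possibly trivial walk without repeated vertices) ending
at `x` visits exactly the vertices in `A` and has total `w`-weight `S`. -/
inductive WeightedPath (R : V → V → Prop) (w : V → V → ℤ) : V → Finset V → ℤ → Prop
  | nil (x) : WeightedPath R w x {x} 0
  | snoc {x y A S} (hy : y ∉ A) : WeightedPath R w x A S → R x y →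
      WeightedPath R w y (A.cons y hy) (S + w x y)

lemma WeightedPath.card_pos {x : V} {A : Finset V} {S : ℤ} (h : WeightedPath R w x A S) :
    0 < A.card := by
  cases h <;> simp

lemma WeightedPath.weight_lt_card (hw : ∀ x y, w x y ≤ 1) {x : V} {A : Finset V} {S : ℤ}
    (h : WeightedPath R w x A S) : S < A.card := by
  induction h with
  | nil x => simp
  | @snoc x y A S hy _ _ ih =>
    have := hw x y
    rw [Finset.card_cons]
    push_cast
    linarith

lemma WeightedPath.exists_split {x y : V} {A : Finset V} {S : ℤ} (h : WeightedPath R w x A S)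
    (hy : y ∈ A) :
    y = x ∨ ∃ B S₁ S₂, WeightedPath R w y B S₁ ∧ WeightedWalk R w y x S₂ ∧ S₁ + S₂ = S := by
  induction h with
  | nil x => exact Or.inl (Finset.mem_singleton.1 hy)
  | @snoc x z A S hz hpath hxz ih =>
    rcases Finset.mem_cons.1 hy with rfl | hyA
    · exact Or.inl rfl
    · right
      rcases ih hyA with rfl | ⟨B, S₁, S₂, hB, hwalk, rfl⟩
      · exact ⟨A, S, _, hpath, .single hxz, rfl⟩
      · exact ⟨B, S₁, _, hB, hwalk.tail hxz, by ring⟩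

/-- The lengths of the paths ending at `x`, where a step `y → z` has length `1 + T * w y z`. -/
def pathLengths (R : V → V → Prop) (w : V → V → ℤ) (T : ℤ) (x : V) : Set ℤ :=
  {m | ∃ A S, WeightedPath R w x A S ∧ (A.card : ℤ) - 1 + T * S = m}

lemma zero_mem_pathLengths (T : ℤ) (x : V) : 0 ∈ pathLengths R w T x :=
  ⟨{x}, 0, .nil x, by simp⟩

variable [Fintype V] {T : ℕ}

lemma lt_of_mem_pathLengths (hw : ∀ x y, w x y ≤ 1) (hT : Fintype.card V ≤ T) {x : V} {m : ℤ}
    (hm : m ∈ pathLengths R w T x) : m < T * Fintype.card V := by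
  obtain ⟨A, S, hpath, rfl⟩ := hm
  have hS : S + 1 ≤ Fintype.card V := by
    have := hpath.weight_lt_card hw
    have := A.card_le_univ
    omega
  have hA : (A.card : ℤ) ≤ T := by exact_mod_cast A.card_le_univ.trans hT
  have := mul_le_mul_of_nonneg_left hS (Int.natCast_nonneg T)
  linarith

lemma exists_mem_pathLengths_of_rel (hcycle : ∀ x S, WeightedWalk R w x x S → S < 0)
    (hT : Fintype.card V ≤ T) {x y : V} (hxy : R x y) {m : ℤ} (hm : m ∈ pathLengths R w T x) :
    ∃ m' ∈ pathLengths R w T y, m + T * w x y < m' := by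
  obtain ⟨A, S, hpath, rfl⟩ := hm
  by_cases hy : y ∈ A
  · rcases hpath.exists_split hy with rfl | ⟨B, S₁, S₂, hB, hwalk, rfl⟩
    · refine ⟨_, ⟨A, S, hpath, rfl⟩, ?_⟩
      have hloop : w y y < 0 := hcycle y _ (.single hxy)
      have hpos : (0 : ℤ) < T := by
        exact_mod_cast (Fintype.card_pos_iff.2 ⟨y⟩).trans_le hT
      linarith [mul_neg_of_pos_of_neg hpos hloop]
    · -- Cutting the path at `y` removes a closed walk of weight at most `-1`, and the resulting
      -- gain of `T` outweighs the vertices that are lost.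
      refine ⟨_, ⟨B, S₁, hB, rfl⟩, ?_⟩
      have hclosed : S₂ + w x y + 1 ≤ 0 := hcycle y _ (hwalk.tail hxy)
      have hA : (A.card : ℤ) ≤ T := by exact_mod_cast A.card_le_univ.trans hT
      have hB_pos : (0 : ℤ) < B.card := by exact_mod_cast hB.card_pos
      have := mul_nonpos_of_nonneg_of_nonpos (Int.natCast_nonneg T) hclosed
      linarith
  · refine ⟨_, ⟨_, _, .snoc hy hpath hxy, rfl⟩, ?_⟩
    rw [Finset.card_cons]
    push_cast
    linarith

lemma exists_potential (hw : ∀ x y, w x y ≤ 1) (hcycle : ∀ x S, WeightedWalk R w x x S → S < 0)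
    (hT : Fintype.card V ≤ T) :
    ∃ f : V → ℕ, (∀ x, f x < T * Fintype.card V) ∧
      ∀ x y, R x y → (f x : ℤ) + T * w x y < f y := by
  have hbdd x : BddAbove (pathLengths R w T x) :=
    ⟨_, fun _ hm => (lt_of_mem_pathLengths hw hT hm).le⟩
  have hmem x : sSup (pathLengths R w T x) ∈ pathLengths R w T x :=
    Int.csSup_mem ⟨0, zero_mem_pathLengths T x⟩ (hbdd x)
  have hnonneg x : 0 ≤ sSup (pathLengths R w T x) :=
    le_csSup (hbdd x) (zero_mem_pathLengths T x)
  choose f hf using fun x => Int.eq_ofNat_of_zero_le (hnonneg x)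
  refine ⟨f, fun x => ?_, fun x y hxy => ?_⟩
  · have := lt_of_mem_pathLengths hw hT (hmem x)
    rw [hf] at this
    exact_mod_cast this
  · obtain ⟨m, hm, hlt⟩ := exists_mem_pathLengths_of_rel hcycle hT hxy (hmem x)
    rw [← hf, ← hf]
    exact hlt.trans_le (le_csSup (hbdd y) hm)

end Potential

section Helical

variable {V : Type*}

/-- A relation on vertices with types in `ℤ/4` that relates no opposite types, is a strict order on
the union of any two cyclically consecutive types (which three pairwise non-opposite types always
lie in), is total inside each type, and has no cycle descending once around `ℤ/4`. -/
structure IsHelical (τ : V → ZMod 4) (R : V → V → Prop) : Prop where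
  irrefl : ∀ x, ¬ R x x
  ne_opposite : ∀ {x y}, R x y → τ y ≠ τ x + 2
  trans : ∀ {x y z}, R x y → R y z → τ z ≠ τ x + 2 → R x z
  total : ∀ {x y}, τ x = τ y → x ≠ y → R x y ∨ R y x
  no_descending_cycle : ∀ {a b c d}, τ b = τ a - 1 → τ c = τ b - 1 → τ d = τ c - 1 →
    R a b → R b c → R c d → ¬ R d a

/-- The number of times, counted with sign, that the short step from `a` to `b` crosses the cut
of `ℤ/4` between `3` and `0`; the descending direction is positive. -/
def winding (a b : ZMod 4) : ℤ :=
  if a = 0 ∧ b = 3 then 1 else if a = 3 ∧ b = 0 then -1 else 0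

lemma winding_le_one (a b : ZMod 4) : winding a b ≤ 1 := by
  revert a b
  decide

lemma winding_self (a : ZMod 4) : winding a a = 0 := by
  revert a
  decide

lemma winding_swap (a b : ZMod 4) : winding b a = -winding a b := by
  revert a b
  decide

lemma eq_or_eq_add_unit_of_ne_opposite {a b : ZMod 4} (h : b ≠ a + 2) :
    b = a ∨ ∃ ε : ℤˣ, b = a + ((ε : ℤ) : ZMod 4) ∧ (b.val : ℤ) - a.val - 4 * winding a b = ε := by
  revert a b
  decide

lemma add_unit_ne_opposite (a : ZMod 4) (ε : ℤˣ) : a + ((ε : ℤ) : ZMod 4) ≠ a + 2 := by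
  revert a ε
  decide

/-- `Climb τ R ε k x y`: an `R`-walk from `x` to `y` whose `k` steps all shift the type by `ε`;
for `k = 0` it is a single step inside one type. -/
inductive Climb (τ : V → ZMod 4) (R : V → V → Prop) (ε : ℤˣ) : ℕ → V → V → Prop
  | level {x y} : τ y = τ x → R x y → Climb τ R ε 0 x y
  | start {x y} : τ y = τ x + ((ε : ℤ) : ZMod 4) → R x y → Climb τ R ε 1 x y
  | step {k x y z} : Climb τ R ε k x y → τ z = τ y + ((ε : ℤ) : ZMod 4) → R y z →
      Climb τ R ε (k + 1) x z

variable {τ : V → ZMod 4} {R : V → V → Prop} {ε : ℤˣ} {k : ℕ} {x y z : V}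

namespace IsHelical

lemma trans_of_type_eq (h : IsHelical τ R) (hxy : R x y) (hyz : R y z) (hz : τ z = τ x) :
    R x z :=
  h.trans hxy hyz (by rw [hz]; exact (by decide : ∀ a : ZMod 4, a ≠ a + 2) _)

lemma trans_of_type_eq_add_unit (h : IsHelical τ R) (hxy : R x y) (hyz : R y z)
    (hz : τ z = τ x + ((ε : ℤ) : ZMod 4)) : R x z :=
  h.trans hxy hyz (by rw [hz]; exact add_unit_ne_opposite _ _)

lemma climb_trans_level (h : IsHelical τ R) (hc : Climb τ R ε k x y) (hz : τ z = τ y)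
    (hyz : R y z) : Climb τ R ε k x z := by
  cases hc with
  | level hy hxy => exact .level (hz.trans hy) (h.trans_of_type_eq hxy hyz (hz.trans hy))
  | start hy hxy => exact .start (hz.trans hy) (h.trans_of_type_eq_add_unit hxy hyz (hz.trans hy))
  | step hc hy hvy =>
    exact .step hc (hz.trans hy) (h.trans_of_type_eq_add_unit hvy hyz (hz.trans hy))

lemma climb_step_back (h : IsHelical τ R) (hc : Climb τ R ε (k + 1) x y)
    (hz : τ z = τ y - ((ε : ℤ) : ZMod 4)) (hyz : R y z) : Climb τ R ε k x z := by
  cases hc with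
  | start hy hxy =>
    have hzx : τ z = τ x := by rw [hz, hy, add_sub_cancel_right]
    exact .level hzx (h.trans_of_type_eq hxy hyz hzx)
  | @step _ _ v _ hc hy hvy =>
    have hzv : τ z = τ v := by rw [hz, hy, add_sub_cancel_right]
    exact h.climb_trans_level hc hzv (h.trans_of_type_eq hvy hyz hzv)

lemma exists_climb_tail (h : IsHelical τ R) (hc : Climb τ R ε k x y) {δ : ℤˣ}
    (hz : τ z = τ y + ((δ : ℤ) : ZMod 4)) (hyz : R y z) :
    ∃ (ε' : ℤˣ) (k' : ℕ), (ε' * k' : ℤ) = ε * k + δ ∧ Climb τ R ε' k' x z := by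
  rcases (eq_or_ne δ ε).imp_right Int.units_ne_iff_eq_neg.1 with rfl | rfl
  · exact ⟨δ, k + 1, by push_cast; ring, hc.step hz hyz⟩
  · rcases k with _ | k
    · cases hc with
      | level hy hxy => exact ⟨-ε, 1, by simp, .step (.level hy hxy) hz hyz⟩
    · refine ⟨ε, k, by push_cast; ring, h.climb_step_back hc ?_ hyz⟩
      rw [hz]
      push_cast
      ring

lemma exists_climb_of_weightedWalk (h : IsHelical τ R) {S : ℤ}
    (hwalk : WeightedWalk R (fun x y => winding (τ x) (τ y)) x y S) :
    ∃ (ε : ℤˣ) (k : ℕ), (ε * k : ℤ) = (τ y).val - (τ x).val - 4 * S ∧ Climb τ R ε k x y := by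
  induction hwalk with
  | @single y hxy =>
    rcases eq_or_eq_add_unit_of_ne_opposite (h.ne_opposite hxy) with hy | ⟨ε, hy, hε⟩
    · exact ⟨1, 0, by simp [hy, winding_self], .level hy hxy⟩
    · exact ⟨ε, 1, by rw [hε, Nat.cast_one, mul_one], .start hy hxy⟩
  | @tail y z S _ hyz ih =>
    obtain ⟨ε, k, hk, hc⟩ := ih
    rcases eq_or_eq_add_unit_of_ne_opposite (h.ne_opposite hyz) with hz | ⟨δ, hz, hδ⟩
    · exact ⟨ε, k, by rw [hk, hz, winding_self, add_zero], h.climb_trans_level hc hz hyz⟩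
    · obtain ⟨ε', k', hk', hc'⟩ := h.exists_climb_tail hc hz hyz
      exact ⟨ε', k', by rw [hk', hk, ← hδ]; ring, hc'⟩

lemma rel_of_four_descents (h : IsHelical τ R) {a b c d e : V} (hb : τ b = τ a - 1)
    (hc : τ c = τ b - 1) (hd : τ d = τ c - 1) (he : τ e = τ d - 1) (hab : R a b) (hbc : R b c)
    (hcd : R c d) (hde : R d e) : τ e = τ a ∧ R a e := by
  have hea : τ e = τ a := by
    rw [he, hd, hc, hb]
    exact (by decide : ∀ t : ZMod 4, t - 1 - 1 - 1 - 1 = t) _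
  refine ⟨hea, ?_⟩
  have hda : ¬ R d a := h.no_descending_cycle hb hc hd hab hbc hcd
  rcases eq_or_ne a e with rfl | hne
  · exact absurd hde hda
  · refine (h.total hea.symm hne).resolve_right fun hea' => hda (h.trans hde hea' ?_)
    rw [← hea, he]
    exact (by decide : ∀ t : ZMod 4, t - 1 ≠ t + 2) _

lemma climb_neg_one_of_add_four (h : IsHelical τ R) (hc : Climb τ R (-1) (k + 4) x y) :
    Climb τ R (-1) k x y := by
  have type_sub {a b : V} (hb : τ b = τ a + (((-1 : ℤˣ) : ℤ) : ZMod 4)) : τ b = τ a - 1 := by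
    rw [hb]
    push_cast
    ring
  obtain _ | _ | @⟨_, _, d, _, hc, hy, hdy⟩ := hc
  obtain _ | _ | @⟨_, _, c, _, hc, hd, hcd⟩ := hc
  obtain _ | _ | @⟨_, _, b, _, hc, hc', hbc⟩ := hc
  have hrel {a : V} (hb : τ b = τ a + (((-1 : ℤˣ) : ℤ) : ZMod 4)) (hab : R a b) :=
    h.rel_of_four_descents (type_sub hb) (type_sub hc') (type_sub hd) (type_sub hy) hab hbc hcd hdy
  cases hc with
  | start hb hxb => exact .level (hrel hb hxb).1 (hrel hb hxb).2
  | step hc hb hab => exact h.climb_trans_level hc (hrel hb hab).1 (hrel hb hab).2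

lemma not_climb_neg_one_self (h : IsHelical τ R) (m : ℕ) : ¬ Climb τ R (-1) (4 * m) x x := by
  induction m with
  | zero =>
    rintro (⟨-, hxx⟩)
    exact h.irrefl x hxx
  | succ m ih => exact fun hc => ih (h.climb_neg_one_of_add_four hc)

lemma weight_neg_of_closed_walk (h : IsHelical τ R) {S : ℤ}
    (hwalk : WeightedWalk R (fun x y => winding (τ x) (τ y)) x x S) : S < 0 := by
  by_contra! hS
  obtain ⟨ε, k, hk, hc⟩ := h.exists_climb_of_weightedWalk hwalk
  rcases Int.units_eq_one_or ε with rfl | rfl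
  · obtain rfl : k = 0 := by
      push_cast at hk
      omega
    cases hc with
    | level _ hxx => exact h.irrefl x hxx
  · obtain ⟨m, rfl⟩ : ∃ m, k = 4 * m := ⟨S.toNat, by push_cast at hk; omega⟩
    exact h.not_climb_neg_one_self m hc

end IsHelical

end Helical

section Nested

variable {V : Type*} {G : SimpleGraph V} {A B : Set V}

/-- The neighbourhoods in `B` of the vertices of `A` form a chain under inclusion; equivalently, so
do the neighbourhoods in `A` of the vertices of `B`. -/
def IsNested (G : SimpleGraph V) (A B : Set V) : Prop :=
  ∀ ⦃c⦄, c ∈ A → ∀ ⦃d⦄, d ∈ A → ∀ ⦃i⦄, i ∈ B → ∀ ⦃j⦄, j ∈ B →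
    G.Adj c i → G.Adj d j → G.Adj c j ∨ G.Adj d i

lemma IsNested.mono {A' B' : Set V} (h : IsNested G A B) (hA : A' ⊆ A) (hB : B' ⊆ B) :
    IsNested G A' B' :=
  fun _ hc _ hd _ hi _ hj => h (hA hc) (hA hd) (hB hi) (hB hj)

lemma isNested_of_adj_iff_lt {α : Type*} [LinearOrder α] (φ ψ : V → α)
    (h : ∀ c ∈ A, ∀ i ∈ B, G.Adj c i ↔ φ i < ψ c) : IsNested G A B := by
  intro c hc d hd i hi j hj hci hdj
  rw [h c hc i hi] at hci
  rw [h d hd j hj] at hdj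
  rw [h c hc j hj, h d hd i hi]
  rcases le_total (ψ c) (ψ d) with hcd | hdc
  · exact Or.inr (hci.trans_le hcd)
  · exact Or.inl (hdj.trans_le hdc)

lemma isNested_of_isThresholdGraph (hB : IndepSet G B)
    (h : IsThresholdGraph (G.induce (A ∪ B))) : IsNested G A B := by
  have forced {c d i j : V} (hc : c ∈ A) (hd : d ∈ A) (hi : i ∈ B) (hj : j ∈ B) (hci : G.Adj c i)
      (hdj : G.Adj d j)
      (hle : VicinalLE (G.induce (A ∪ B)) ⟨c, Or.inl hc⟩ ⟨d, Or.inl hd⟩) : G.Adj d i := by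
    rcases @hle ⟨i, Or.inr hi⟩ hci with hdi | hid
    · exact hdi
    · obtain rfl : i = d := congrArg Subtype.val hid
      exact absurd hdj (hB hi hj)
  intro c hc d hd i hi j hj hci hdj
  rcases h (x := ⟨c, Or.inl hc⟩) trivial (y := ⟨d, Or.inl hd⟩) trivial with hle | hle
  · exact Or.inr (forced hc hd hi hj hci hdj hle)
  · exact Or.inl (forced hd hc hj hi hdj hci hle)

lemma IsNested.isThresholdGraph (h : IsNested G A B) (hA : G.IsClique A) (hB : IndepSet G B) :
    IsThresholdGraph (G.induce (A ∪ B)) := by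
  have mem_left {x y : V} (hx : x ∈ B) (hy : y ∈ A ∪ B) (hxy : G.Adj x y) : y ∈ A :=
    hy.resolve_right fun hyB => hB hx hyB hxy
  have mem_right {x y : V} (hx : x ∈ A) (hy : y ∈ A ∪ B) (hxy : ¬ (G.Adj x y ∨ y = x)) : y ∈ B :=
    hy.resolve_left fun hyA => hxy (or_iff_not_imp_right.2 fun hne => hA hx hyA (Ne.symm hne))
  suffices hcomp : ∀ x ∈ A ∪ B, ∀ y ∈ A ∪ B,
      (∀ z ∈ A ∪ B, G.Adj x z → G.Adj y z ∨ z = y) ∨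
        ∀ z ∈ A ∪ B, G.Adj y z → G.Adj x z ∨ z = x by
    rintro ⟨x, hx⟩ - ⟨y, hy⟩ -
    exact (hcomp x hx y hy).imp
      (fun hle z hz => (hle z z.2 hz).imp id Subtype.ext)
      (fun hle z hz => (hle z z.2 hz).imp id Subtype.ext)
  have right_le_left {x y : V} (hx : x ∈ B) (hy : y ∈ A) (z : V) (hz : z ∈ A ∪ B)
      (hxz : G.Adj x z) : G.Adj y z ∨ z = y := by
    by_contra hyz
    exact hB hx (mem_right hy hz hyz) hxz
  rintro x (hx | hx) y (hy | hy)
  · by_contra! ⟨⟨z, hz, hxz, hyz⟩, ⟨u, hu, hyu, hxu⟩⟩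
    have hzB := mem_right hy hz (not_or.2 hyz)
    have huB := mem_right hx hu (not_or.2 hxu)
    exact (h hx hy hzB huB hxz hyu).elim hxu.1 hyz.1
  · exact Or.inr (right_le_left hy hx)
  · exact Or.inl (right_le_left hx hy)
  · by_contra! ⟨⟨z, hz, hxz, hyz⟩, ⟨u, hu, hyu, hxu⟩⟩
    have hzA := mem_left hx hz hxz
    have huA := mem_left hy hu hyu
    exact (h hzA huA hx hy hxz.symm hyu.symm).elim (hyz.1 ·.symm) (hxu.1 ·.symm)

end Nested

section Typing

variable {V : Type*} {G : SimpleGraph V} {τ : V → ZMod 4}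

/-- The even types, which are those of the clique vertices. -/
abbrev IsCliqueType (a : ZMod 4) : Prop := a = 0 ∨ a = 2

/-- A map to `ℤ/4` whose fibres over `0, 2, 1, 3` serve as `C¹, C², I¹, I²` in the definition of a
split permutation graph. -/
structure IsSplitPermTyping (G : SimpleGraph V) (τ : V → ZMod 4) : Prop where
  isClique : G.IsClique {x | IsCliqueType (τ x)}
  indepSet : IndepSet G {x | ¬ IsCliqueType (τ x)}
  isNested_of_isCliqueType : ∀ {a}, IsCliqueType a →
    IsNested G {x | τ x = a} {x | ¬ IsCliqueType (τ x)}
  isNested_of_not_isCliqueType : ∀ {b}, ¬ IsCliqueType b →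
    IsNested G {x | IsCliqueType (τ x)} {x | τ x = b}

lemma IsSplitPermTyping.isSplitPermGraph (h : IsSplitPermTyping G τ) : IsSplitPermGraph G := by
  have hclique {a : ZMod 4} (ha : IsCliqueType a) : {x | τ x = a} ⊆ {x | IsCliqueType (τ x)} :=
    fun x hx => by rwa [← show τ x = a from hx] at ha
  have hindep {b : ZMod 4} (hb : ¬ IsCliqueType b) : {x | τ x = b} ⊆ {x | ¬ IsCliqueType (τ x)} :=
    fun x hx => by rwa [← show τ x = b from hx] at hb
  have hthresholdC {a : ZMod 4} (ha : IsCliqueType a) :=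
    (h.isNested_of_isCliqueType ha).isThresholdGraph (h.isClique.subset (hclique ha)) h.indepSet
  have hthresholdI {b : ZMod 4} (hb : ¬ IsCliqueType b) :=
    (h.isNested_of_not_isCliqueType hb).isThresholdGraph h.isClique
      fun _ hx _ hy => h.indepSet (hindep hb hx) (hindep hb hy)
  have hdisjoint {a b : ZMod 4} (hab : a ≠ b) : Disjoint {x | τ x = a} {x | τ x = b} :=
    Set.disjoint_left.2 fun x hxa hxb => hab (hxa.symm.trans hxb)
  refine ⟨{x | IsCliqueType (τ x)}, {x | ¬ IsCliqueType (τ x)}, {x | τ x = 0}, {x | τ x = 2},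
    {x | τ x = 1}, {x | τ x = 3}, Set.union_compl_self _, disjoint_compl_right, h.isClique,
    h.indepSet, rfl, hdisjoint (by decide), ?_, hdisjoint (by decide), hthresholdC (by decide),
    hthresholdC (by decide), hthresholdI (by decide), hthresholdI (by decide)⟩
  ext x
  exact (by decide : ∀ a : ZMod 4, a = 1 ∨ a = 3 ↔ ¬ IsCliqueType a) (τ x)

end Typing

section HelixGraph

variable {V : Type*} (t : V → ZMod 4) (p : V → ℤ) (T : ℤ)

/-- The split graph on vertices `x` of type `t x` placed at height `p x` on a helix of pitch `T`:
a clique vertex is joined to the independent vertices below it. -/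
def helixGraph : SimpleGraph V :=
  .fromRel fun x y => IsCliqueType (t x) ∧
    (IsCliqueType (t y) ∨ p y < p x + T * winding (t x) (t y))

variable {t p T} {x y : V}

lemma helixGraph_adj_of_isCliqueType (hx : IsCliqueType (t x)) (hy : IsCliqueType (t y)) :
    (helixGraph t p T).Adj x y ↔ x ≠ y := by
  rw [helixGraph, SimpleGraph.fromRel_adj]
  tauto

lemma helixGraph_adj_iff_lt (hx : IsCliqueType (t x)) (hy : ¬ IsCliqueType (t y)) :
    (helixGraph t p T).Adj x y ↔ p y < p x + T * winding (t x) (t y) := by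
  have hne : x ≠ y := fun h => hy (h ▸ hx)
  rw [helixGraph, SimpleGraph.fromRel_adj]
  tauto

lemma not_helixGraph_adj (hx : ¬ IsCliqueType (t x)) (hy : ¬ IsCliqueType (t y)) :
    ¬ (helixGraph t p T).Adj x y := by
  rw [helixGraph, SimpleGraph.fromRel_adj]
  tauto

variable (t p T)

lemma isSplitPermTyping_helixGraph : IsSplitPermTyping (helixGraph t p T) t where
  isClique _ hx _ hy hne := (helixGraph_adj_of_isCliqueType hx hy).2 hne
  indepSet _ hx _ hy := not_helixGraph_adj hx hy
  isNested_of_isCliqueType {a} ha := by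
    refine isNested_of_adj_iff_lt (fun i => p i - T * winding a (t i)) p ?_
    rintro c rfl i hi
    rw [helixGraph_adj_iff_lt ha hi, sub_lt_iff_lt_add]
  isNested_of_not_isCliqueType {b} hb := by
    refine isNested_of_adj_iff_lt p (fun c => p c + T * winding (t c) b) ?_
    rintro c hc i rfl
    exact helixGraph_adj_iff_lt hc hb

end HelixGraph

section OrientedTyping

variable {V : Type*} {G : SimpleGraph V} {C C₁ C₂ I₁ I₂ : Set V} {c d e : V}

/-- A typing in which a vertex of type `0` never has both more neighbours of type `1` and fewer
neighbours of type `3` than a vertex of type `2`. This determines which of the two clique types is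
the one shifted in `helixGraph`. -/
structure IsOrientedTyping (G : SimpleGraph V) (τ : V → ZMod 4) : Prop
    extends IsSplitPermTyping G τ where
  oriented : ∀ {c i d j}, τ c = 0 → τ i = 1 → τ d = 2 → τ j = 3 →
    G.Adj c i → G.Adj d j → G.Adj c j ∨ G.Adj d i

/-- Plotting a vertex `c` at the point `(|N(c) ∩ I₁|, |N(c) ∩ I₂|)`, the point of `c` lies strictly
to the left of and strictly above that of `d`. -/
def IsNorthwestOf (G : SimpleGraph V) (I₁ I₂ : Set V) (c d : V) : Prop :=
  (∃ i ∈ I₁, ¬ G.Adj c i ∧ G.Adj d i) ∧ ∃ j ∈ I₂, G.Adj c j ∧ ¬ G.Adj d j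

lemma IsNorthwestOf.trans (h₁ : IsNested G C I₁) (h₂ : IsNested G C I₂) (hd : d ∈ C) (he : e ∈ C)
    (hcd : IsNorthwestOf G I₁ I₂ c d) (hde : IsNorthwestOf G I₁ I₂ d e) :
    IsNorthwestOf G I₁ I₂ c e := by
  obtain ⟨⟨i, hi, hci, hdi⟩, ⟨j, hj, hcj, hdj⟩⟩ := hcd
  obtain ⟨⟨i', hi', hdi', hei'⟩, ⟨j', hj', hdj', hej'⟩⟩ := hde
  refine ⟨⟨i, hi, hci, ?_⟩, ⟨j, hj, hcj, fun hej => ?_⟩⟩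
  · exact (h₁ he hd hi' hi hei' hdi).resolve_right hdi'
  · exact (h₂ he hd hj hj' hej hdj').elim hej' hdj

lemma IsNested.not_isNorthwestOf {A : Set V} (h : IsNested G A (I₁ ∪ I₂)) (hc : c ∈ A)
    (hd : d ∈ A) : ¬ IsNorthwestOf G I₁ I₂ c d := by
  rintro ⟨⟨i, hi, hci, hdi⟩, ⟨j, hj, hcj, hdj⟩⟩
  exact (h hc hd (Or.inr hj) (Or.inl hi) hcj hdi).elim hci hdj

lemma isNested_union_of_not_isNorthwestOf (h₁ : IsNested G C I₁) (h₂ : IsNested G C I₂)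
    (h : ∀ c ∈ C, ∀ d ∈ C, ¬ IsNorthwestOf G I₁ I₂ c d) : IsNested G C (I₁ ∪ I₂) := by
  rintro c hc d hd i (hi | hi) j (hj | hj) hci hdj
  · exact h₁ hc hd hi hj hci hdj
  · by_contra! ⟨hcj, hdi⟩
    exact h d hd c hc ⟨⟨i, hi, hdi, hci⟩, ⟨j, hj, hdj, hcj⟩⟩
  · by_contra! ⟨hcj, hdi⟩
    exact h c hc d hd ⟨⟨j, hj, hcj, hdj⟩, ⟨i, hi, hci, hdi⟩⟩
  · exact h₂ hc hd hi hj hci hdj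

lemma IsNorthwestOf.not_isNorthwestOf (h₁ : IsNested G (C₁ ∪ C₂) I₁)
    (h₂ : IsNested G (C₁ ∪ C₂) I₂) (hC₁ : IsNested G C₁ (I₁ ∪ I₂))
    (hC₂ : IsNested G C₂ (I₁ ∪ I₂)) (hc : c ∈ C₁ ∪ C₂) (hd : d ∈ C₁ ∪ C₂) (he : e ∈ C₁ ∪ C₂)
    (hcd : IsNorthwestOf G I₁ I₂ c d) : ¬ IsNorthwestOf G I₁ I₂ d e := by
  intro hde
  have hce := hcd.trans h₁ h₂ hd he hde
  have hsep {x y : V} (hxy : IsNorthwestOf G I₁ I₂ x y) :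
      ¬ (x ∈ C₁ ∧ y ∈ C₁) ∧ ¬ (x ∈ C₂ ∧ y ∈ C₂) :=
    ⟨fun h => hC₁.not_isNorthwestOf h.1 h.2 hxy, fun h => hC₂.not_isNorthwestOf h.1 h.2 hxy⟩
  have := hsep hcd
  have := hsep hde
  have := hsep hce
  -- Two of `c`, `d`, `e` lie in the same chain.
  simp only [Set.mem_union] at hc hd he
  tauto

open Classical in
/-- The typing of a split permutation graph with clique `C` and independent set `I₁ ∪ I₂` that
sends the clique vertices northwest of some other one to `0`. -/
noncomputable def northwestTyping (G : SimpleGraph V) (C I₁ I₂ : Set V) (x : V) : ZMod 4 :=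
  if x ∈ C then if ∃ d ∈ C, IsNorthwestOf G I₁ I₂ x d then 0 else 2
  else if x ∈ I₁ then 1 else 3

lemma isCliqueType_northwestTyping_iff {x : V} :
    IsCliqueType (northwestTyping G C I₁ I₂ x) ↔ x ∈ C := by
  unfold northwestTyping
  split_ifs <;> simp_all [(by decide : IsCliqueType 0), (by decide : IsCliqueType 2),
    (by decide : ¬ IsCliqueType 1), (by decide : ¬ IsCliqueType 3)]

lemma northwestTyping_eq_zero_iff {x : V} :
    northwestTyping G C I₁ I₂ x = 0 ↔ x ∈ C ∧ ∃ d ∈ C, IsNorthwestOf G I₁ I₂ x d := by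
  unfold northwestTyping
  split_ifs <;> simp_all [(by decide : (1 : ZMod 4) ≠ 0 ∧ (2 : ZMod 4) ≠ 0 ∧ (3 : ZMod 4) ≠ 0)]

lemma northwestTyping_eq_two_iff {x : V} :
    northwestTyping G C I₁ I₂ x = 2 ↔ x ∈ C ∧ ∀ d ∈ C, ¬ IsNorthwestOf G I₁ I₂ x d := by
  unfold northwestTyping
  split_ifs <;> simp_all [(by decide : (0 : ZMod 4) ≠ 2 ∧ (1 : ZMod 4) ≠ 2 ∧ (3 : ZMod 4) ≠ 2)]

lemma northwestTyping_eq_one_iff {x : V} :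
    northwestTyping G C I₁ I₂ x = 1 ↔ x ∉ C ∧ x ∈ I₁ := by
  unfold northwestTyping
  split_ifs <;> simp_all [(by decide : (0 : ZMod 4) ≠ 1 ∧ (2 : ZMod 4) ≠ 1 ∧ (3 : ZMod 4) ≠ 1)]

lemma northwestTyping_eq_three_iff {x : V} :
    northwestTyping G C I₁ I₂ x = 3 ↔ x ∉ C ∧ x ∉ I₁ := by
  unfold northwestTyping
  split_ifs <;> simp_all [(by decide : (0 : ZMod 4) ≠ 3 ∧ (1 : ZMod 4) ≠ 3 ∧ (2 : ZMod 4) ≠ 3)]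

lemma isOrientedTyping_northwestTyping (hpart : (C₁ ∪ C₂)ᶜ = I₁ ∪ I₂)
    (hclique : G.IsClique (C₁ ∪ C₂)) (hindep : IndepSet G (I₁ ∪ I₂))
    (hC₁ : IsNested G C₁ (I₁ ∪ I₂)) (hC₂ : IsNested G C₂ (I₁ ∪ I₂))
    (hI₁ : IsNested G (C₁ ∪ C₂) I₁) (hI₂ : IsNested G (C₁ ∪ C₂) I₂) :
    IsOrientedTyping G (northwestTyping G (C₁ ∪ C₂) I₁ I₂) := by
  have mem_I₂ {x : V} (hx : northwestTyping G (C₁ ∪ C₂) I₁ I₂ x = 3) : x ∈ I₂ := by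
    obtain ⟨hxC, hxI₁⟩ := northwestTyping_eq_three_iff.1 hx
    exact (hpart.subset hxC).resolve_left hxI₁
  have hcompl : {x | ¬ IsCliqueType (northwestTyping G (C₁ ∪ C₂) I₁ I₂ x)} = I₁ ∪ I₂ := by
    simp only [isCliqueType_northwestTyping_iff]
    exact hpart
  refine ⟨⟨?_, ?_, ?_, ?_⟩, ?_⟩
  · simp only [isCliqueType_northwestTyping_iff]
    exact hclique
  · rwa [hcompl]
  · rw [hcompl]
    rintro a (rfl | rfl)
    · have hsub : {x | northwestTyping G (C₁ ∪ C₂) I₁ I₂ x = 0} ⊆ C₁ ∪ C₂ :=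
        fun x hx => (northwestTyping_eq_zero_iff.1 hx).1
      refine isNested_union_of_not_isNorthwestOf (hI₁.mono hsub le_rfl) (hI₂.mono hsub le_rfl) ?_
      intro c hc d hd hcd
      obtain ⟨hdC, e, he, hde⟩ := northwestTyping_eq_zero_iff.1 hd
      exact hcd.not_isNorthwestOf hI₁ hI₂ hC₁ hC₂ (hsub hc) hdC he hde
    · have hsub : {x | northwestTyping G (C₁ ∪ C₂) I₁ I₂ x = 2} ⊆ C₁ ∪ C₂ :=
        fun x hx => (northwestTyping_eq_two_iff.1 hx).1
      exact isNested_union_of_not_isNorthwestOf (hI₁.mono hsub le_rfl) (hI₂.mono hsub le_rfl)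
        fun c hc d hd => (northwestTyping_eq_two_iff.1 hc).2 d (hsub hd)
  · intro b hb
    simp only [isCliqueType_northwestTyping_iff]
    obtain rfl | rfl := (by decide : ∀ b : ZMod 4, ¬ IsCliqueType b → b = 1 ∨ b = 3) b hb
    · exact hI₁.mono le_rfl fun x hx => (northwestTyping_eq_one_iff.1 hx).2
    · exact hI₂.mono le_rfl fun x hx => mem_I₂ hx
  · intro c i d j hc hi hd hj hci hdj
    by_contra! ⟨hcj, hdi⟩
    exact (northwestTyping_eq_two_iff.1 hd).2 c (northwestTyping_eq_zero_iff.1 hc).1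
      ⟨⟨i, (northwestTyping_eq_one_iff.1 hi).2, hdi, hci⟩, ⟨j, mem_I₂ hj, hdj, hcj⟩⟩

lemma IsSplitPermGraph.exists_isOrientedTyping (h : IsSplitPermGraph G) :
    ∃ τ, IsOrientedTyping G τ := by
  obtain ⟨_, _, C₁, C₂, I₁, I₂, huniv, hdisj, hclique, hindep, rfl, -, rfl, -,
    hC₁, hC₂, hI₁, hI₂⟩ := h
  have hI₁_indep : IndepSet G I₁ := fun _ hx _ hy => hindep (Or.inl hx) (Or.inl hy)
  have hI₂_indep : IndepSet G I₂ := fun _ hx _ hy => hindep (Or.inr hx) (Or.inr hy)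
  exact ⟨_, isOrientedTyping_northwestTyping
    (IsCompl.compl_eq ⟨hdisj, codisjoint_iff.2 huniv⟩) hclique hindep
    (isNested_of_isThresholdGraph hindep hC₁) (isNested_of_isThresholdGraph hindep hC₂)
    (isNested_of_isThresholdGraph hI₁_indep hI₁) (isNested_of_isThresholdGraph hI₂_indep hI₂)⟩

end OrientedTyping

section HelixRel

variable {V : Type*} {G : SimpleGraph V} {τ : V → ZMod 4} {x y z : V}

/-- The comparison of a clique vertex with an independent vertex that adjacency in `helixGraph`
prescribes: the independent vertex is below the clique vertex iff the two are adjacent. -/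
def CrossBelow (G : SimpleGraph V) (τ : V → ZMod 4) (x y : V) : Prop :=
  (¬ IsCliqueType (τ x) ∧ IsCliqueType (τ y) ∧ G.Adj y x) ∨
    (IsCliqueType (τ x) ∧ ¬ IsCliqueType (τ y) ∧ ¬ G.Adj x y)

/-- Everything `CrossBelow` the vertex `x` is also `CrossBelow` the vertex `y`. -/
def CrossLE (G : SimpleGraph V) (τ : V → ZMod 4) (x y : V) : Prop :=
  ∀ z, CrossBelow G τ z x → CrossBelow G τ z y

/-- `CrossBelow` together with, inside each type, `CrossLE` with ties broken by the given linear
order on the vertices. -/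
def HelixRel [LinearOrder V] (G : SimpleGraph V) (τ : V → ZMod 4) (x y : V) : Prop :=
  CrossBelow G τ x y ∨ (τ x = τ y ∧ CrossLE G τ x y ∧ (CrossLE G τ y x → x < y))

lemma crossBelow_iff_adj (hx : ¬ IsCliqueType (τ x)) (hy : IsCliqueType (τ y)) :
    CrossBelow G τ x y ↔ G.Adj y x := by
  unfold CrossBelow
  tauto

lemma crossBelow_iff_not_adj (hx : IsCliqueType (τ x)) (hy : ¬ IsCliqueType (τ y)) :
    CrossBelow G τ x y ↔ ¬ G.Adj x y := by
  unfold CrossBelow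
  tauto

lemma CrossBelow.isCliqueType_iff (h : CrossBelow G τ x y) :
    IsCliqueType (τ x) ↔ ¬ IsCliqueType (τ y) := by
  unfold CrossBelow at h
  tauto

lemma CrossBelow.type_ne (h : CrossBelow G τ x y) : τ x ≠ τ y := by
  intro heq
  have := h.isCliqueType_iff
  rw [heq] at this
  exact iff_not_self this

lemma CrossBelow.ne_opposite (h : CrossBelow G τ x y) : τ y ≠ τ x + 2 :=
  (by decide : ∀ a b : ZMod 4, (IsCliqueType a ↔ ¬ IsCliqueType b) → b ≠ a + 2) _ _
    h.isCliqueType_iff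

lemma crossBelow_iff_not_crossBelow (h : IsCliqueType (τ x) ↔ ¬ IsCliqueType (τ y)) :
    CrossBelow G τ x y ↔ ¬ CrossBelow G τ y x := by
  unfold CrossBelow
  tauto

lemma IsSplitPermTyping.crossLE_total (h : IsSplitPermTyping G τ) (hxy : τ x = τ y) :
    CrossLE G τ x y ∨ CrossLE G τ y x := by
  by_contra! hcon
  simp only [CrossLE, not_forall] at hcon
  obtain ⟨⟨z, hzx, hzy⟩, ⟨u, huy, hux⟩⟩ := hcon
  have hz := hzx.isCliqueType_iff
  have hu := huy.isCliqueType_iff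
  by_cases hx : IsCliqueType (τ x)
  · have hy := hxy ▸ hx
    replace hz : ¬ IsCliqueType (τ z) := fun hz' => hz.1 hz' hx
    replace hu : ¬ IsCliqueType (τ u) := fun hu' => hu.1 hu' hy
    rw [crossBelow_iff_adj hz hx] at hzx
    rw [crossBelow_iff_adj hz hy] at hzy
    rw [crossBelow_iff_adj hu hy] at huy
    rw [crossBelow_iff_adj hu hx] at hux
    exact (h.isNested_of_isCliqueType hx rfl hxy.symm hz hu hzx huy).elim hux hzy
  · have hy := hxy ▸ hx
    replace hz := hz.2 hx
    replace hu := hu.2 hy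
    rw [crossBelow_iff_not_adj hz hx] at hzx
    rw [crossBelow_iff_not_adj hz hy, not_not] at hzy
    rw [crossBelow_iff_not_adj hu hy] at huy
    rw [crossBelow_iff_not_adj hu hx, not_not] at hux
    exact (h.isNested_of_not_isCliqueType hx hz hu hxy.symm rfl hzy hux).elim hzx huy

lemma IsOrientedTyping.not_crossBelow_of_descending (h : IsOrientedTyping G τ) {a b c d : V}
    (hb : τ b = τ a - 1) (hc : τ c = τ b - 1) (hd : τ d = τ c - 1) (hab : CrossBelow G τ a b)
    (hbc : CrossBelow G τ b c) (hcd : CrossBelow G τ c d) : ¬ CrossBelow G τ d a := by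
  intro hda
  have from_zero {a b c d : V} (ha : τ a = 0) (hb : τ b = 3) (hc : τ c = 2) (hd : τ d = 1)
      (hab : CrossBelow G τ a b) (hbc : CrossBelow G τ b c) (hcd : CrossBelow G τ c d)
      (hda : CrossBelow G τ d a) : False := by
    rw [crossBelow_iff_not_adj (by rw [ha]; decide) (by rw [hb]; decide)] at hab
    rw [crossBelow_iff_adj (by rw [hb]; decide) (by rw [hc]; decide)] at hbc
    rw [crossBelow_iff_not_adj (by rw [hc]; decide) (by rw [hd]; decide)] at hcd
    rw [crossBelow_iff_adj (by rw [hd]; decide) (by rw [ha]; decide)] at hda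
    exact (h.oriented ha hd hc hb hda hbc).elim hab hcd
  rw [hc, hb] at hd
  rw [hb] at hc
  obtain ha | ha | ha | ha :=
    (by decide : ∀ t : ZMod 4, t = 0 ∨ t = 1 ∨ t = 2 ∨ t = 3) (τ a) <;>
    rw [ha] at hb hc hd
  · exact from_zero ha hb hc hd hab hbc hcd hda
  · exact from_zero hb hc hd ha hbc hcd hda hab
  · exact from_zero hc hd ha hb hcd hda hab hbc
  · exact from_zero hd ha hb hc hda hab hbc hcd

variable [LinearOrder V]

lemma IsSplitPermTyping.helixRel_trans (h : IsSplitPermTyping G τ) (hxy : HelixRel G τ x y)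
    (hyz : HelixRel G τ y z) (hxz : τ z ≠ τ x + 2) : HelixRel G τ x z := by
  rcases hxy with hxy | ⟨hτxy, hxy, hlt_xy⟩ <;> rcases hyz with hyz | ⟨hτyz, hyz, hlt_yz⟩
  · have hτxz : τ x = τ z :=
      (by decide : ∀ a b : ZMod 4, (IsCliqueType a ↔ IsCliqueType b) → b ≠ a + 2 → a = b) _ _
        (by rw [hxy.isCliqueType_iff, hyz.isCliqueType_iff, not_not]) hxz
    have hzx : ¬ CrossLE G τ z x := fun hle =>
      (crossBelow_iff_not_crossBelow hxy.isCliqueType_iff).1 hxy (hle y hyz)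
    exact Or.inr ⟨hτxz, (h.crossLE_total hτxz).resolve_right hzx, fun hle => absurd hle hzx⟩
  · exact Or.inl (hyz x hxy)
  · have hparity := hyz.isCliqueType_iff
    refine Or.inl ((crossBelow_iff_not_crossBelow (hτxy ▸ hparity)).2 fun hzx => ?_)
    exact (crossBelow_iff_not_crossBelow hparity).1 hyz (hxy z hzx)
  · refine Or.inr ⟨hτxy.trans hτyz, fun u hu => hyz u (hxy u hu), fun hzx => ?_⟩
    exact (hlt_xy fun u hu => hzx u (hyz u hu)).trans (hlt_yz fun u hu => hxy u (hzx u hu))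

lemma IsSplitPermTyping.helixRel_total (h : IsSplitPermTyping G τ) (hxy : τ x = τ y)
    (hne : x ≠ y) : HelixRel G τ x y ∨ HelixRel G τ y x := by
  by_cases hle : CrossLE G τ x y
  · by_cases hge : CrossLE G τ y x
    · exact hne.lt_or_gt.imp (fun hlt => Or.inr ⟨hxy, hle, fun _ => hlt⟩)
        fun hlt => Or.inr ⟨hxy.symm, hge, fun _ => hlt⟩
    · exact Or.inl (Or.inr ⟨hxy, hle, fun hge' => absurd hge' hge⟩)
  · exact Or.inr (Or.inr
      ⟨hxy.symm, (h.crossLE_total hxy).resolve_left hle, fun hle' => absurd hle' hle⟩)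

lemma HelixRel.crossBelow_of_type_ne (h : HelixRel G τ x y) (hne : τ x ≠ τ y) :
    CrossBelow G τ x y :=
  h.resolve_right fun hsame => hne hsame.1

lemma IsOrientedTyping.isHelical_helixRel (h : IsOrientedTyping G τ) :
    IsHelical τ (HelixRel G τ) where
  irrefl x := by
    rintro (hxx | ⟨-, hle, hlt⟩)
    · exact hxx.type_ne rfl
    · exact lt_irrefl x (hlt hle)
  ne_opposite := by
    rintro x y (hxy | ⟨hxy, -⟩)
    · exact hxy.ne_opposite
    · rw [hxy]
      exact (by decide : ∀ a : ZMod 4, a ≠ a + 2) _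
  trans := h.helixRel_trans
  total := h.helixRel_total
  no_descending_cycle := by
    intro a b c d hb hc hd hab hbc hcd hda
    have sub_one_ne : ∀ t : ZMod 4, t ≠ t - 1 := by decide
    have hτda : τ d ≠ τ a := by
      rw [hd, hc, hb]
      exact (by decide : ∀ t : ZMod 4, t - 1 - 1 - 1 ≠ t) _
    exact h.not_crossBelow_of_descending hb hc hd
      (hab.crossBelow_of_type_ne (hb ▸ sub_one_ne _))
      (hbc.crossBelow_of_type_ne (hc ▸ sub_one_ne _))
      (hcd.crossBelow_of_type_ne (hd ▸ sub_one_ne _)) (hda.crossBelow_of_type_ne hτda)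

end HelixRel

section Embedding

variable {W : Type*} {H : SimpleGraph W} {τ : W → ZMod 4} {T : ℕ}

lemma IsOrientedTyping.exists_heights [Fintype W] (h : IsOrientedTyping H τ)
    (hT : Fintype.card W ≤ T) :
    ∃ f : W → ℕ, (∀ x, f x < T * Fintype.card W) ∧
      (∀ x y, τ x = τ y → f x = f y → x = y) ∧
      ∀ x y, IsCliqueType (τ x) → ¬ IsCliqueType (τ y) →
        (H.Adj x y ↔ (f y : ℤ) < f x + T * winding (τ x) (τ y)) := by
  let : LinearOrder W := IsWellOrder.linearOrder WellOrderingRel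
  have hR := h.isHelical_helixRel
  obtain ⟨f, hf_lt, hf⟩ := exists_potential (fun x y => winding_le_one (τ x) (τ y))
    (fun x S => hR.weight_neg_of_closed_walk) hT
  refine ⟨f, hf_lt, fun x y hτ hfxy => ?_, fun x y hx hy => ?_⟩
  · have not_rel {x y : W} (hτ : τ x = τ y) (hfxy : f x = f y) : ¬ HelixRel H τ x y := by
      intro hxy
      have := hf x y hxy
      rw [hτ, hfxy, winding_self, mul_zero, add_zero] at this
      exact lt_irrefl _ this
    by_contra hne
    exact (hR.total hτ hne).elim (not_rel hτ hfxy) (not_rel hτ.symm hfxy.symm)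
  · refine ⟨fun hadj => ?_, fun hlt => ?_⟩
    · have := hf y x (Or.inl ((crossBelow_iff_adj hy hx).2 hadj))
      rw [winding_swap] at this
      linarith
    · by_contra hadj
      exact lt_asymm hlt (hf x y (Or.inl ((crossBelow_iff_not_adj hx hy).2 hadj)))

lemma IsSplitPermTyping.nonempty_embedding_helixGraph {V : Type*} {t : V → ZMod 4} {p : V → ℤ}
    {T : ℤ} (h : IsSplitPermTyping H τ) (φ : W ↪ V) (ht : ∀ x, t (φ x) = τ x)
    (hadj : ∀ x y, IsCliqueType (τ x) → ¬ IsCliqueType (τ y) →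
      (H.Adj x y ↔ p (φ y) < p (φ x) + T * winding (τ x) (τ y))) :
    Nonempty (H ↪g helixGraph t p T) := by
  have hmixed {x y : W} (hx : IsCliqueType (τ x)) (hy : ¬ IsCliqueType (τ y)) :
      (helixGraph t p T).Adj (φ x) (φ y) ↔ H.Adj x y := by
    rw [helixGraph_adj_iff_lt (by rwa [ht]) (by rwa [ht]), hadj x y hx hy, ht, ht]
  refine ⟨⟨φ, fun {x y} => ?_⟩⟩
  by_cases hx : IsCliqueType (τ x) <;> by_cases hy : IsCliqueType (τ y)
  · rw [helixGraph_adj_of_isCliqueType (by rwa [ht]) (by rwa [ht]), φ.injective.ne_iff]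
    exact ⟨fun hne => h.isClique hx hy hne, SimpleGraph.Adj.ne⟩
  · exact hmixed hx hy
  · rw [SimpleGraph.adj_comm, hmixed hy hx, SimpleGraph.adj_comm]
  · exact iff_of_false (not_helixGraph_adj (by rwa [ht]) (by rwa [ht])) (h.indepSet hx hy)

end Embedding

theorem exists_universal_split_permutation_graph_general.{u} {n m : ℕ} (hm : n ^ 2 ≤ m) :
    ∃ U : SimpleGraph (Fin (4 * m)), IsSplitPermGraph U ∧
      ∀ (W : Type u) [Fintype W] (H : SimpleGraph W),
        Fintype.card W ≤ n → IsSplitPermGraph H → Nonempty (H ↪g U) := by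
  let q : Fin (4 * m) ≃ ZMod 4 × Fin m := finProdFinEquiv.symm
  refine ⟨helixGraph (fun v => (q v).1) (fun v => (q v).2) n,
    (isSplitPermTyping_helixGraph _ _ _).isSplitPermGraph, fun W _ H hcard hH => ?_⟩
  obtain ⟨τ, hτ⟩ := hH.exists_isOrientedTyping
  obtain ⟨f, hf_lt, hf_inj, hf_adj⟩ := hτ.exists_heights hcard
  have hf_lt_m x : f x < m :=
    (hf_lt x).trans_le ((Nat.mul_le_mul_left n hcard).trans (sq n ▸ hm))
  let φ : W ↪ Fin (4 * m) :=
    ⟨fun x => q.symm (τ x, ⟨f x, hf_lt_m x⟩), fun x y hxy => by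
      obtain ⟨hτxy, hfxy⟩ := Prod.ext_iff.1 (q.symm.injective hxy)
      exact hf_inj x y hτxy (congrArg Fin.val hfxy)⟩
  have hq x : q (φ x) = (τ x, ⟨f x, hf_lt_m x⟩) := q.apply_symm_apply _
  refine hτ.nonempty_embedding_helixGraph φ (fun x => by rw [hq]) fun x y hx hy => ?_
  simp only [hq]
  exact hf_adj x y hx hy

/-- For every positive `n` there is a split permutation graph with `4n³` vertices
containing every `n`-vertex split permutation graph as an induced subgraph. -/
theorem exists_universal_split_permutation_graph (n : ℕ) (hn : 0 < n) :
    ∃ U : SimpleGraph (Fin (4 * n ^ 3)), IsSplitPermGraph U ∧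
      ∀ (W : Type) [Fintype W] (H : SimpleGraph W),
        Fintype.card W = n → IsSplitPermGraph H → Nonempty (H ↪g U) := by
  obtain ⟨U, hU, huniv⟩ :=
    exists_universal_split_permutation_graph_general (Nat.pow_le_pow_right hn (by norm_num : 2 ≤ 3))
  exact ⟨U, hU, fun W _ H hcard => huniv W H hcard.le⟩
end

section
/- Every split permutation graph with n vertices is isomorphic to an induced subgraph of some symmetric split permutation graph with exactly 2n vertices. -/
/-- The universal threshold graph `T_m`: clique `c₀,…,c_{m-1}` (left summand),
independent set `i₀,…,i_{m-1}` (right summand), with `i_j` adjacent to `c_a` iff `a ≤ j`. -/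
def univThresholdGraph (m : ℕ) : SimpleGraph (Fin m ⊕ Fin m) :=
  SimpleGraph.fromRel (fun x y =>
    match x, y with
    | Sum.inl _, Sum.inl _ => True
    | Sum.inl a, Sum.inr j => (a : ℕ) ≤ (j : ℕ)
    | _, _ => False)

/-- `G` is a symmetric split permutation graph witnessed by the partition
`C = C1 ∪ C2`, `I = I1 ∪ I2`. -/
def IsSymSplitPermWith {V : Type*} (G : SimpleGraph V) (C1 C2 I1 I2 : Set V) : Prop :=
  (C1 ∪ C2) ∪ (I1 ∪ I2) = Set.univ ∧
  Disjoint C1 C2 ∧ Disjoint I1 I2 ∧ Disjoint (C1 ∪ C2) (I1 ∪ I2) ∧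
  G.IsClique (C1 ∪ C2) ∧ IndepSet G (I1 ∪ I2) ∧
  IsThresholdGraph (G.induce (C1 ∪ (I1 ∪ I2))) ∧
  IsThresholdGraph (G.induce (C2 ∪ (I1 ∪ I2))) ∧
  IsThresholdGraph (G.induce ((C1 ∪ C2) ∪ I1)) ∧
  IsThresholdGraph (G.induce ((C1 ∪ C2) ∪ I2)) ∧
  (∃ m1 : ℕ, Nonempty (G.induce (C1 ∪ I1) ≃g univThresholdGraph m1)) ∧
  (∃ m2 : ℕ, Nonempty (G.induce (C2 ∪ I2) ≃g univThresholdGraph m2))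

/-- A symmetric split permutation graph. -/
def IsSymSplitPermGraph {V : Type*} (G : SimpleGraph V) : Prop :=
  ∃ C1 C2 I1 I2 : Set V, IsSymSplitPermWith G C1 C2 I1 I2

/-!
Write a split graph as a relation `R` between its clique and its independent set. It is threshold
iff `R` is a Ferrers relation: whenever `R a b` and `R a' b'`, also `R a b'` or `R a' b`. A split
permutation graph is thus a relation whose two sides are 2-coloured so that the Ferrers condition
holds as soon as `a, a'` or `b, b'` have the same colour.

Within a colour class all vertices, from the clique and from the independent set alike, can be
linearly ordered so that rows shrink, columns grow, and `R a b` means `a ≤ b`. Now give every vertex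
of the order both a clique copy and an independent copy. Inside a colour class the copies are joined
according to `≤`, which is the universal threshold graph; between the classes they are joined
according to the least monotone extension of `R`. This doubles the number of vertices and induces
the original graph on the original copies.
-/

open Set Sum

universe u

variable {V V' α β α' β' κ : Type*} {G : SimpleGraph V} {G' : SimpleGraph V'}

theorem isThresholdGraph_iff_adj_or_adj :
    IsThresholdGraph G ↔ ∀ ⦃x y x' y'⦄, G.Adj x y → G.Adj x' y' → y ≠ x' → y' ≠ x →
      G.Adj x y' ∨ G.Adj x' y := by
  constructor
  · intro hG x y x' y' hxy hxy' hyx' hyx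
    rcases hG (mem_univ x) (mem_univ x') with hle | hle
    · exact .inr ((hle hxy).resolve_right hyx')
    · exact .inl ((hle hxy').resolve_right hyx)
  · intro hG x _ x' _
    by_contra! ⟨hle, hle'⟩
    obtain ⟨y, hxy, hy⟩ := not_subset.mp hle
    obtain ⟨y', hxy', hy'⟩ := not_subset.mp hle'
    rw [mem_union, not_or] at hy hy'
    exact (hG hxy hxy' hy.2 hy'.2).elim hy'.1 hy.1

theorem IsThresholdGraph.of_embedding (hG' : IsThresholdGraph G') (f : G ↪g G') :
    IsThresholdGraph G := by
  rw [isThresholdGraph_iff_adj_or_adj] at hG' ⊢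
  intro x y x' y' hxy hxy' hyx' hyx
  simpa only [f.map_adj_iff] using hG' (f.map_adj_iff.mpr hxy) (f.map_adj_iff.mpr hxy')
    (f.injective.ne hyx') (f.injective.ne hyx)

theorem IsThresholdGraph.adj_or_adj_of_induce_union {C I : Set V}
    (hG : IsThresholdGraph (G.induce (C ∪ I))) (hCI : Disjoint C I) {c c' i i' : V}
    (hc : c ∈ C) (hc' : c' ∈ C) (hi : i ∈ I) (hi' : i' ∈ I)
    (hci : G.Adj c i) (hci' : G.Adj c' i') : G.Adj c i' ∨ G.Adj c' i := by
  have hne : ∀ {x y}, x ∈ C → y ∈ I → y ≠ x := fun hx hy ↦ (hCI.ne_of_mem hx hy).symm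
  exact isThresholdGraph_iff_adj_or_adj.mp hG
    (x := ⟨c, .inl hc⟩) (y := ⟨i, .inr hi⟩) (x' := ⟨c', .inl hc'⟩) (y' := ⟨i', .inr hi'⟩)
    hci hci' (Subtype.coe_ne_coe.mp (hne hc' hi)) (Subtype.coe_ne_coe.mp (hne hc hi'))

theorem IsSymSplitPermGraph.of_iso (hG' : IsSymSplitPermGraph G') (e : G ≃g G') :
    IsSymSplitPermGraph G := by
  let restrict (S : Set V') : G.induce (e ⁻¹' S) ≃g G'.induce S :=
    e.induce (e.toEquiv.bijOn fun _ ↦ Iff.rfl)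
  have pull_threshold {S : Set V'} (hS : IsThresholdGraph (G'.induce S)) :
      IsThresholdGraph (G.induce (e ⁻¹' S)) := hS.of_embedding (restrict S).toEmbedding
  have pull_iso {S : Set V'} : (∃ m, Nonempty (G'.induce S ≃g univThresholdGraph m)) →
      ∃ m, Nonempty (G.induce (e ⁻¹' S) ≃g univThresholdGraph m) :=
    fun ⟨m, ⟨f⟩⟩ ↦ ⟨m, ⟨f.comp (restrict S)⟩⟩
  obtain ⟨C₁, C₂, I₁, I₂, hcover, hC, hI, hCI, hclique, hindep, hC₁, hC₂, hI₁, hI₂, hiso₁, hiso₂⟩ :=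
    hG'
  refine ⟨e ⁻¹' C₁, e ⁻¹' C₂, e ⁻¹' I₁, e ⁻¹' I₂, congrArg (e ⁻¹' ·) hcover, hC.preimage e,
    hI.preimage e, hCI.preimage e, ?_, ?_, pull_threshold hC₁, pull_threshold hC₂,
    pull_threshold hI₁, pull_threshold hI₂, pull_iso hiso₁, pull_iso hiso₂⟩
  · exact fun x hx y hy hxy ↦ e.map_adj_iff.mp (hclique hx hy (e.injective.ne hxy))
  · exact fun x hx y hy hxy ↦ hindep hx hy (e.map_adj_iff.mpr hxy)

/-- The split graph with clique `α` and independent set `β` in which `a : α` and `b : β` are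
adjacent iff `R a b`. -/
def splitGraph (R : α → β → Prop) : SimpleGraph (α ⊕ β) :=
  SimpleGraph.fromRel fun
    | inl _, inl _ => True
    | inl a, inr b => R a b
    | _, _ => False

section SplitGraph

variable {R : α → β → Prop} {P : α' → β' → Prop}

@[simp]
theorem splitGraph_adj_inl_inl {a a' : α} : (splitGraph R).Adj (inl a) (inl a') ↔ a ≠ a' := by
  simp [splitGraph]

@[simp]
theorem splitGraph_adj_inl_inr {a : α} {b : β} : (splitGraph R).Adj (inl a) (inr b) ↔ R a b := by
  simp [splitGraph]

@[simp]
theorem splitGraph_adj_inr_inl {a : α} {b : β} : (splitGraph R).Adj (inr b) (inl a) ↔ R a b := by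
  simp [splitGraph]

@[simp]
theorem not_splitGraph_adj_inr_inr {b b' : β} : ¬ (splitGraph R).Adj (inr b) (inr b') := by
  simp [splitGraph]

theorem univThresholdGraph_eq_splitGraph (m : ℕ) :
    univThresholdGraph m = splitGraph fun i j : Fin m ↦ i ≤ j := by
  ext (i | i) (j | j) <;> simp [univThresholdGraph]

/-- The embedding of split graphs induced by embeddings of their cliques and of their independent
sets. -/
def splitGraphEmbedding (f : α ↪ α') (g : β ↪ β') (h : ∀ a b, P (f a) (g b) ↔ R a b) :
    splitGraph R ↪g splitGraph P where
  toEmbedding := f.sumMap g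
  map_rel_iff' := by rintro (a | b) (a' | b') <;> simp [h]

theorem range_splitGraphEmbedding (f : α ↪ α') (g : β ↪ β') (h : ∀ a b, P (f a) (g b) ↔ R a b) :
    range (splitGraphEmbedding f g h) = inl '' range f ∪ inr '' range g := by
  rw [Sum.range_eq, ← range_comp, ← range_comp]
  rfl

theorem isThresholdGraph_induce_splitGraph {S : Set α} {T : Set β}
    (h : ∀ a ∈ S, ∀ a' ∈ S, ∀ b ∈ T, ∀ b' ∈ T, R a b → R a' b' → R a b' ∨ R a' b) :
    IsThresholdGraph ((splitGraph R).induce (inl '' S ∪ inr '' T)) := by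
  rw [isThresholdGraph_iff_adj_or_adj]
  rintro ⟨_, ⟨a, ha, rfl⟩ | ⟨a, ha, rfl⟩⟩ ⟨_, ⟨b, hb, rfl⟩ | ⟨b, hb, rfl⟩⟩
    ⟨_, ⟨a', ha', rfl⟩ | ⟨a', ha', rfl⟩⟩ ⟨_, ⟨b', hb', rfl⟩ | ⟨b', hb', rfl⟩⟩ <;>
    grind [SimpleGraph.induce_adj, splitGraph_adj_inl_inl, splitGraph_adj_inl_inr,
      splitGraph_adj_inr_inl, not_splitGraph_adj_inr_inr]

theorem exists_induce_splitGraph_iso_univThresholdGraph [LinearOrder α]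
    {R : α → α → Prop} {S : Set α} [Finite S] (h : ∀ a ∈ S, ∀ b ∈ S, R a b ↔ a ≤ b) :
    ∃ m, Nonempty ((splitGraph R).induce (inl '' S ∪ inr '' S) ≃g univThresholdGraph m) := by
  have : Fintype S := Fintype.ofFinite S
  let e : Fin (Fintype.card S) ≃o S := Fintype.orderIsoFinOfCardEq S rfl
  let ι : Fin (Fintype.card S) ↪ α := e.toEmbedding.trans (.subtype (· ∈ S))
  have range_ι : range ι = S := (e.surjective.range_comp Subtype.val).trans Subtype.range_coe
  let f := splitGraphEmbedding (R := fun i j ↦ i ≤ j) (P := R) ι ι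
    fun i j ↦ (h _ (e i).2 _ (e j).2).trans e.le_iff_le
  have range_f : range f = inl '' S ∪ inr '' S :=
    (range_splitGraphEmbedding ι ι _).trans (by rw [range_ι])
  refine ⟨Fintype.card S, ?_⟩
  rw [univThresholdGraph_eq_splitGraph, ← range_f]
  exact ⟨f.isoInduceRange.symm⟩

theorem nonempty_iso_splitGraph {C : Set V} (hC : G.IsClique C) (hI : IndepSet G Cᶜ) :
    Nonempty (G ≃g splitGraph fun (c : C) (i : ↥Cᶜ) ↦ G.Adj c i) := by
  classical
  refine ⟨.symm ⟨Equiv.Set.sumCompl C, ?_⟩⟩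
  rintro (c | i) (c' | i')
  · simpa [Subtype.ext_iff] using ⟨fun h ↦ h.ne, hC c.2 c'.2⟩
  · simp
  · simp [G.adj_comm]
  · simpa using hI i.2 i'.2

end SplitGraph

/-- The relation `R`, with colourings `s` and `t` of its two sides, is Ferrers along colours: the
Ferrers condition holds on each colour class of rows (against all columns) and on each colour class
of columns (against all rows). For two colours this says that `splitGraph R` is a split permutation
graph, the colours being the indices of the parts. -/
def IsColorFerrers (s : α → κ) (t : β → κ) (R : α → β → Prop) : Prop :=
  ∀ ⦃a a' b b'⦄, s a = s a' ∨ t b = t b' → R a b → R a' b' → R a b' ∨ R a' b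

theorem IsSplitPermGraph.exists_iso_splitGraph {V : Type u} {G : SimpleGraph V}
    (hG : IsSplitPermGraph G) :
    ∃ (α β : Type u) (s : α → Bool) (t : β → Bool) (R : α → β → Prop),
      IsColorFerrers s t R ∧ Nonempty (G ≃g splitGraph R) := by
  classical
  obtain ⟨C, I, C₁, C₂, I₁, I₂, hcover, hCI, hclique, hindep, rfl, -, rfl, -, hC₁, hC₂, hI₁, hI₂⟩ :=
    hG
  have compl_C : (C₁ ∪ C₂)ᶜ = I₁ ∪ I₂ :=
    (IsCompl.of_eq hCI.inter_eq hcover).compl_eq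
  refine ⟨_, _, fun c ↦ decide (c.1 ∈ C₁), fun i ↦ decide (i.1 ∈ I₁), _, ?_,
    nonempty_iso_splitGraph hclique (compl_C ▸ hindep)⟩
  rintro ⟨c, hc⟩ ⟨c', hc'⟩ ⟨i, hi⟩ ⟨i', hi'⟩ hcolor hci hci'
  rw [compl_C] at hi hi'
  rw [decide_eq_decide, decide_eq_decide] at hcolor
  rcases hcolor with hcolor | hcolor
  · by_cases h : c ∈ C₁
    · exact hC₁.adj_or_adj_of_induce_union (hCI.mono_left subset_union_left) h (hcolor.mp h)
        hi hi' hci hci'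
    · exact hC₂.adj_or_adj_of_induce_union (hCI.mono_left subset_union_right)
        (hc.resolve_left h) (hc'.resolve_left (h ∘ hcolor.mpr)) hi hi' hci hci'
  · by_cases h : i ∈ I₁
    · exact hI₁.adj_or_adj_of_induce_union (hCI.mono_right subset_union_left) hc hc' h
        (hcolor.mp h) hci hci'
    · exact hI₂.adj_or_adj_of_induce_union (hCI.mono_right subset_union_right) hc hc'
        (hi.resolve_left h) (hi'.resolve_left (h ∘ hcolor.mpr)) hci hci'

theorem IsColorFerrers.isSymSplitPermGraph [Finite α] [LinearOrder α] {s : α → Bool}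
    {R : α → α → Prop} (hR : IsColorFerrers s s R)
    (hle : ∀ ⦃a b⦄, s a = s b → (R a b ↔ a ≤ b)) : IsSymSplitPermGraph (splitGraph R) := by
  let S (k : Bool) : Set α := s ⁻¹' {k}
  have S_union : S true ∪ S false = univ := by
    ext a; cases h : s a <;> simp [S, h]
  have S_disjoint : Disjoint (S true) (S false) :=
    .preimage s (by simp)
  have same_color {k a b} (ha : a ∈ S k) (hb : b ∈ S k) : s a = s b := Eq.trans ha hb.symm
  have rows_threshold (k) : IsThresholdGraph ((splitGraph R).induce (inl '' S k ∪ inr '' univ)) :=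
    isThresholdGraph_induce_splitGraph fun _ ha _ ha' _ _ _ _ ↦ hR (.inl (same_color ha ha'))
  have cols_threshold (k) : IsThresholdGraph ((splitGraph R).induce (inl '' univ ∪ inr '' S k)) :=
    isThresholdGraph_induce_splitGraph fun _ _ _ _ _ hb _ hb' ↦ hR (.inr (same_color hb hb'))
  have diagonal_iso (k) :
      ∃ m, Nonempty ((splitGraph R).induce (inl '' S k ∪ inr '' S k) ≃g univThresholdGraph m) :=
    exists_induce_splitGraph_iso_univThresholdGraph fun _ ha _ hb ↦ hle (same_color ha hb)
  refine ⟨inl '' S true, inl '' S false, inr '' S true, inr '' S false, ?_⟩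
  rw [IsSymSplitPermWith, ← image_union, ← image_union, S_union]
  refine ⟨?_, disjoint_image_of_injective inl_injective S_disjoint,
    disjoint_image_of_injective inr_injective S_disjoint, ?_, ?_, ?_,
    rows_threshold _, rows_threshold _, cols_threshold _, cols_threshold _,
    diagonal_iso _, diagonal_iso _⟩
  · simp
  · simpa using isCompl_range_inl_range_inr.disjoint
  · rintro _ ⟨a, -, rfl⟩ _ ⟨a', -, rfl⟩ hne
    simpa using hne
  · rintro _ ⟨b, -, rfl⟩ _ ⟨b', -, rfl⟩
    exact not_splitGraph_adj_inr_inr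

theorem exists_linearOrder_lt_of_isStrictOrder (r : α → α → Prop) [IsStrictOrder α r] :
    ∃ _ : LinearOrder α, ∀ ⦃x y⦄, r x y → x < y := by
  let _ : PartialOrder α := partialOrderOfSO r
  refine ⟨(inferInstance : LinearOrder (LinearExtension α)), fun x y hxy ↦ ?_⟩
  exact toLinearExtension.monotone.strictMono_of_injective (fun _ _ ↦ id) hxy

section ColorFerrers

variable {s : α → κ} {t : β → κ} {R : α → β → Prop}

theorem IsColorFerrers.row_lt (hR : IsColorFerrers s t R) {a a' : α} {b : β} (hcolor : s a = s a')
    (hab : R a b) (hab' : ¬ R a' b) : R a' < R a :=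
  ⟨fun _ h ↦ (hR (.inl hcolor) hab h).resolve_right hab', fun hle ↦ hab' (hle b hab)⟩

theorem IsColorFerrers.flip (hR : IsColorFerrers s t R) : IsColorFerrers t s (flip R) :=
  fun _ _ _ _ h hab hab' ↦ (hR h.symm hab hab').symm

variable (s t R) in
/-- The strict order that a Ferrers relation forces on each colour class: clique vertices are
ordered by reverse inclusion of their rows, independent vertices by inclusion of their columns, and
`a` comes before or after `b` according to whether `R a b`. -/
def FerrersLT : α ⊕ β → α ⊕ β → Prop
  | inl a, inl a' => s a = s a' ∧ R a' < R a
  | inl a, inr b => s a = t b ∧ R a b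
  | inr b, inl a => t b = s a ∧ ¬ R a b
  | inr b, inr b' => t b = t b' ∧ flip R b < flip R b'

theorem IsColorFerrers.isStrictOrder_ferrersLT (hR : IsColorFerrers s t R) :
    IsStrictOrder (α ⊕ β) (FerrersLT s t R) where
  irrefl := by rintro (a | b) <;> simp [FerrersLT]
  trans := by
    rintro (a | b) (a' | b') (a'' | b'') ⟨hcolor, h⟩ ⟨hcolor', h'⟩ <;>
      refine ⟨hcolor.trans hcolor', ?_⟩
    · exact h'.trans h
    · exact h.le _ h'
    · exact hR.row_lt (hcolor.trans hcolor') h h'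
    · exact h'.le _ h
    · exact fun h'' ↦ h (h'.le _ h'')
    · exact hR.flip.row_lt (hcolor.trans hcolor').symm h' h
    · exact fun h'' ↦ h' (h.le _ h'')
    · exact h.trans h'

/-- The order on the vertices is compatible with `R`: along each colour class rows shrink and
columns grow, and a clique vertex is below an independent vertex of its class iff they are related
by `R`. The order is not required to compare vertices of different colours in any particular way. -/
structure IsFerrersOrder [LE (α ⊕ β)] (s : α → κ) (t : β → κ) (R : α → β → Prop) : Prop where
  row_antitone : ∀ ⦃a a'⦄, s a = s a' → (inl a : α ⊕ β) ≤ inl a' → R a' ≤ R a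
  col_monotone : ∀ ⦃b b'⦄, t b = t b' → (inr b : α ⊕ β) ≤ inr b' → flip R b ≤ flip R b'
  inl_le_inr_iff : ∀ ⦃a b⦄, s a = t b → ((inl a : α ⊕ β) ≤ inr b ↔ R a b)

theorem IsColorFerrers.exists_isFerrersOrder (hR : IsColorFerrers s t R) :
    ∃ _ : LinearOrder (α ⊕ β), IsFerrersOrder s t R := by
  have := hR.isStrictOrder_ferrersLT
  obtain ⟨L, hlt⟩ := exists_linearOrder_lt_of_isStrictOrder (FerrersLT s t R)
  refine ⟨L, fun a a' hcolor hle b hab ↦ ?_, fun b b' hcolor hle a hab ↦ ?_,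
    fun a b hcolor ↦ ⟨fun hle ↦ ?_, fun hab ↦ (@hlt (inl a) (inr b) ⟨hcolor, hab⟩).le⟩⟩ <;>
    by_contra hab' <;> refine hle.not_gt (hlt ?_)
  · exact ⟨hcolor.symm, hR.row_lt hcolor.symm hab hab'⟩
  · exact ⟨hcolor.symm, hR.flip.row_lt hcolor hab hab'⟩
  · exact ⟨hcolor.symm, hab'⟩

/-- The order `≤` restricted to pairs of elements of the same colour. -/
def ColorLE [LE α] (s : α → κ) (x y : α) : Prop :=
  s x = s y ∧ x ≤ y

theorem ColorLE.trans [Preorder α] {x y z : α} (hxy : ColorLE s x y) (hyz : ColorLE s y z) :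
    ColorLE s x z :=
  ⟨hxy.1.trans hyz.1, hxy.2.trans hyz.2⟩

theorem colorLE_refl [Preorder α] (s : α → κ) (x : α) : ColorLE s x x :=
  ⟨rfl, le_rfl⟩

theorem colorLE_total [LinearOrder α] {x y : α} (h : s x = s y) :
    ColorLE s x y ∨ ColorLE s y x :=
  (le_total x y).imp (⟨h, ·⟩) (⟨h.symm, ·⟩)

/-- The least relation between two copies of the vertex set that contains `R` and `ColorLE` and is,
with respect to `ColorLE`, antitone in its first and monotone in its second argument. -/
def MonotoneExtension [LE (α ⊕ β)] (s : α → κ) (t : β → κ) (R : α → β → Prop) (p q : α ⊕ β) :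
    Prop :=
  ColorLE (Sum.elim s t) p q ∨
    ∃ a b, ColorLE (Sum.elim s t) p (inl a) ∧ R a b ∧ ColorLE (Sum.elim s t) (inr b) q

theorem MonotoneExtension.mono [Preorder (α ⊕ β)] {p p' q q' : α ⊕ β}
    (h : MonotoneExtension s t R p q) (hp : ColorLE (Sum.elim s t) p' p)
    (hq : ColorLE (Sum.elim s t) q q') : MonotoneExtension s t R p' q' :=
  h.imp (fun hpq ↦ (hp.trans hpq).trans hq)
    fun ⟨a, b, hpa, hab, hbq⟩ ↦ ⟨a, b, hp.trans hpa, hab, hbq.trans hq⟩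

theorem isColorFerrers_monotoneExtension [LinearOrder (α ⊕ β)] :
    IsColorFerrers (Sum.elim s t) (Sum.elim s t) (MonotoneExtension s t R) := by
  rintro p p' q q' (hcolor | hcolor) hpq hpq'
  · exact (colorLE_total hcolor).imp (hpq'.mono · (colorLE_refl _ _))
      (hpq.mono · (colorLE_refl _ _))
  · exact (colorLE_total hcolor).imp (hpq.mono (colorLE_refl _ _))
      (hpq'.mono (colorLE_refl _ _))

theorem IsFerrersOrder.monotoneExtension_iff_le [Preorder (α ⊕ β)] (hR : IsFerrersOrder s t R)
    {p q : α ⊕ β} (hpq : Sum.elim s t p = Sum.elim s t q) :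
    MonotoneExtension s t R p q ↔ p ≤ q := by
  refine ⟨?_, fun hle ↦ .inl ⟨hpq, hle⟩⟩
  rintro (⟨-, hle⟩ | ⟨a, b, ⟨hpa, hle_a⟩, hab, ⟨hbq, hb_le⟩⟩)
  · exact hle
  · have hcolor : s a = t b := hpa.symm.trans (hpq.trans hbq.symm)
    calc p ≤ inl a := hle_a
      _ ≤ inr b := (hR.inl_le_inr_iff hcolor).mpr hab
      _ ≤ q := hb_le

theorem IsFerrersOrder.monotoneExtension_inl_inr [Preorder (α ⊕ β)] (hR : IsFerrersOrder s t R)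
    (a : α) (b : β) : MonotoneExtension s t R (inl a) (inr b) ↔ R a b := by
  refine ⟨?_, fun hab ↦ .inr ⟨a, b, colorLE_refl _ _, hab, colorLE_refl _ _⟩⟩
  rintro (⟨hcolor, hle⟩ | ⟨a', b', ⟨hcolor_a, hle_a⟩, hab', ⟨hcolor_b, hle_b⟩⟩)
  · exact (hR.inl_le_inr_iff hcolor).mp hle
  · have hab : R a b' := hR.row_antitone hcolor_a hle_a _ hab'
    exact hR.col_monotone hcolor_b hle_b _ hab

end ColorFerrers

/-- Every split permutation graph with `n` vertices is an induced subgraph of some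
symmetric split permutation graph with exactly `2n` vertices. -/
theorem split_perm_embeds_in_symmetric (n : ℕ) (W : Type) [Fintype W]
    (H : SimpleGraph W) (hW : Fintype.card W = n) (hH : IsSplitPermGraph H) :
    ∃ G : SimpleGraph (Fin (2 * n)), IsSymSplitPermGraph G ∧ Nonempty (H ↪g G) := by
  obtain ⟨α, β, s, t, R, hR, ⟨e⟩⟩ := hH.exists_iso_splitGraph
  obtain ⟨_, hle⟩ := hR.exists_isFerrersOrder
  have : Finite (α ⊕ β) := .of_equiv W e.toEquiv
  let K := splitGraph (MonotoneExtension s t R)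
  have hK : IsSymSplitPermGraph K :=
    isColorFerrers_monotoneExtension.isSymSplitPermGraph fun _ _ ↦ hle.monotoneExtension_iff_le
  let f : splitGraph R ↪g K :=
    splitGraphEmbedding .inl .inr hle.monotoneExtension_inl_inr
  have hcard : Nat.card ((α ⊕ β) ⊕ (α ⊕ β)) = 2 * n := by
    rw [Nat.card_sum, ← Nat.card_congr e.toEquiv, Nat.card_eq_fintype_card, hW, two_mul]
  let φ : K.comap (Finite.equivFinOfCardEq hcard).symm ≃g K := .comap _ K
  exact ⟨_, hK.of_iso φ, ⟨φ.symm.toEmbedding.comp (f.comp e.toEmbedding)⟩⟩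
end

section
/- Let G be a split graph whose vertex set is partitioned into a clique C and an independent set I. If C is a vicinal chain, then the whole vertex set of G is a vicinal chain; likewise, if I is a vicinal chain, then the whole vertex set of G is a vicinal chain (i.e., G is a threshold graph). -/
/-!
Incomparable vertices `x` and `y` lie on an alternating 4-cycle `x a y b`: the pairs `xa`, `yb` are
edges and `ay`, `bx` are non-edges. Read from `a`, the same cycle makes `a` and `b` incomparable.
For `x, y ∈ I` both `a` and `b` lie in `C`, so if `C` is a chain then so is `I`; moreover every
vertex of `I` lies below every vertex of `C`. Complementing the graph reverses the vicinal
quasi-order and exchanges `C` with `I`, which turns the second claim into the first.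
-/

section

variable {V : Type*} {G : SimpleGraph V} {C I S T : Set V} {x y : V}

theorem not_vicinalLE_iff : ¬ VicinalLE G x y ↔ ∃ a, G.Adj x a ∧ Gᶜ.Adj a y := by
  simp only [VicinalLE, Set.not_subset, SimpleGraph.mem_neighborSet, Set.mem_union,
    Set.mem_singleton_iff, not_or, SimpleGraph.compl_adj, G.adj_comm y, and_comm]

theorem vicinalLE_compl : VicinalLE Gᶜ x y ↔ VicinalLE G y x := by
  rw [← not_iff_not, not_vicinalLE_iff, not_vicinalLE_iff, compl_compl]
  simp only [SimpleGraph.adj_comm, and_comm]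

theorem vicinalChain_compl : VicinalChain Gᶜ S ↔ VicinalChain G S := by
  simp only [VicinalChain, vicinalLE_compl, or_comm]

theorem indepSet_iff_isIndepSet : IndepSet G S ↔ G.IsIndepSet S :=
  ⟨fun h _ hx _ hy _ => h hx hy, fun h _ hx _ hy hxy => h hx hy hxy.ne hxy⟩

theorem indepSet_compl : IndepSet Gᶜ S ↔ G.IsClique S := by
  rw [indepSet_iff_isIndepSet, SimpleGraph.isIndepSet_compl]

theorem IndepSet.neighborSet_subset (hI : IndepSet G I) (hUnion : C ∪ I = Set.univ)
    (hx : x ∈ I) : G.neighborSet x ⊆ C := fun a hxa =>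
  (hUnion ▸ Set.mem_univ a : a ∈ C ∪ I).resolve_right fun ha => hI hx ha hxa

theorem vicinalLE_of_neighborSet_subset_isClique (hC : G.IsClique C)
    (hx : G.neighborSet x ⊆ C) (hy : y ∈ C) : VicinalLE G x y := fun _ hxa =>
  or_iff_not_imp_right.2 fun hay => hC hy (hx hxa) (Ne.symm hay)

theorem VicinalChain.of_neighborSet_subset (hT : VicinalChain G T)
    (hST : ∀ x ∈ S, G.neighborSet x ⊆ T) : VicinalChain G S := by
  intro x hx y hy
  by_contra hxy
  obtain ⟨hnxy, hnyx⟩ := not_or.1 hxy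
  obtain ⟨a, hxa, hay⟩ := not_vicinalLE_iff.1 hnxy
  obtain ⟨b, hyb, hbx⟩ := not_vicinalLE_iff.1 hnyx
  have hnab : ¬ VicinalLE G a b := not_vicinalLE_iff.2 ⟨x, hxa.symm, hbx.symm⟩
  have hnba : ¬ VicinalLE G b a := not_vicinalLE_iff.2 ⟨y, hyb.symm, hay.symm⟩
  exact (hT (hST x hx hxa) (hST y hy hyb)).elim hnab hnba

theorem VicinalChain.union (hS : VicinalChain G S) (hT : VicinalChain G T)
    (hTS : ∀ x ∈ T, ∀ y ∈ S, VicinalLE G x y) : VicinalChain G (S ∪ T) := by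
  rintro x (hx | hx) y (hy | hy)
  · exact hS hx hy
  · exact Or.inr (hTS y hy x hx)
  · exact Or.inl (hTS x hx y hy)
  · exact hT hx hy

theorem VicinalChain.univ_of_isClique (hUnion : C ∪ I = Set.univ) (hC : G.IsClique C)
    (hI : IndepSet G I) (hChain : VicinalChain G C) : VicinalChain G Set.univ := by
  have hNbr : ∀ x ∈ I, G.neighborSet x ⊆ C := fun _ => hI.neighborSet_subset hUnion
  rw [← hUnion]
  exact hChain.union (hChain.of_neighborSet_subset hNbr) fun x hx _ =>
    vicinalLE_of_neighborSet_subset_isClique hC (hNbr x hx)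

theorem VicinalChain.univ_of_indepSet (hUnion : C ∪ I = Set.univ) (hC : G.IsClique C)
    (hI : IndepSet G I) (hChain : VicinalChain G I) : VicinalChain G Set.univ :=
  have hIcompl : Gᶜ.IsClique I := G.isClique_compl.2 (indepSet_iff_isIndepSet.1 hI)
  vicinalChain_compl.1 <| VicinalChain.univ_of_isClique (Set.union_comm C I ▸ hUnion)
    hIcompl (indepSet_compl.2 hC) (vicinalChain_compl.2 hChain)

theorem split_graph_vicinal_chain_general (hUnion : C ∪ I = Set.univ) (hC : G.IsClique C)
    (hI : IndepSet G I) :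
    (VicinalChain G C → VicinalChain G Set.univ) ∧
    (VicinalChain G I → VicinalChain G Set.univ) :=
  ⟨VicinalChain.univ_of_isClique hUnion hC hI, VicinalChain.univ_of_indepSet hUnion hC hI⟩

end

/-- In a split graph with clique `C` and independent set `I`, if `C` (resp. `I`) is
a vicinal chain then the whole vertex set is a vicinal chain, i.e. the graph is threshold. -/
theorem split_graph_vicinal_chain (V : Type*) [Fintype V] (G : SimpleGraph V) (C I : Set V)
    (hUnion : C ∪ I = Set.univ) (hDisj : Disjoint C I)
    (hC : G.IsClique C) (hI : IndepSet G I) :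
    (VicinalChain G C → VicinalChain G Set.univ) ∧
    (VicinalChain G I → VicinalChain G Set.univ) :=
  split_graph_vicinal_chain_general hUnion hC hI
end

section
/- For any permutation π of length n, the permutation graph G_π is bipartite if and only if π is 321-avoiding. Consequently, the bipartite permutation graphs are exactly the triangle-free permutation graphs, which are exactly the permutation graphs of 321-avoiding permutations. -/
/-- A graph is bipartite if its vertices can be partitioned into at most two
independent sets. -/
def IsBipartiteGraph {V : Type*} (G : SimpleGraph V) : Prop :=
  ∃ A : Set V, IndepSet G A ∧ IndepSet G Aᶜ

/-- The permutation graph of `π`: vertices are positions, and `i`, `j` are adjacent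
iff `i < j` and `π i > π j`. -/
def permGraph {n : ℕ} (π : Equiv.Perm (Fin n)) : SimpleGraph (Fin n) :=
  SimpleGraph.fromRel (fun i j => i < j ∧ π j < π i)

/-- A graph is a permutation graph if it is isomorphic to `G_π` for some permutation `π`. -/
def IsPermutationGraph {V : Type*} (G : SimpleGraph V) : Prop :=
  ∃ (n : ℕ) (π : Equiv.Perm (Fin n)), Nonempty (G ≃g permGraph π)

/-!
The inversions of `π` form a strict partial order on positions, `G_π` is its comparability graph,
and a 321-pattern is a chain of three elements. In any strict partial order such a chain is a
triangle of the comparability graph; if there is none, the non-minimal elements and the minimal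
elements are two independent sets.
-/

theorem IsBipartiteGraph.of_hom {V W : Type*} {G : SimpleGraph V} {H : SimpleGraph W}
    (hH : IsBipartiteGraph H) (f : G →g H) : IsBipartiteGraph G := by
  obtain ⟨A, hA, hAc⟩ := hH
  exact ⟨f ⁻¹' A, fun _ hx _ hy hxy => hA hx hy (f.map_adj hxy),
    fun _ hx _ hy hxy => hAc hx hy (f.map_adj hxy)⟩

theorem IsBipartiteGraph.not_exists_triangle {V : Type*} {G : SimpleGraph V}
    (hG : IsBipartiteGraph G) : ¬ ∃ a b c : V, G.Adj a b ∧ G.Adj b c ∧ G.Adj a c := by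
  rintro ⟨a, b, c, hab, hbc, hac⟩
  obtain ⟨A, hA, hAc⟩ := hG
  have mem_iff_notMem {x y : V} (hxy : G.Adj x y) : x ∈ A ↔ y ∉ A :=
    ⟨fun hx hy => hA hx hy hxy, fun hy => not_not.1 fun hx => hAc hx hy hxy⟩
  have := mem_iff_notMem hab
  have := mem_iff_notMem hbc
  have := mem_iff_notMem hac
  tauto

section ComparabilityGraph

variable {α : Type*} {r : α → α → Prop}

theorem isBipartiteGraph_fromRel_of_not_exists_chain (hr : ¬ ∃ i j k, r i j ∧ r j k) :
    IsBipartiteGraph (SimpleGraph.fromRel r) := by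
  refine ⟨{j | ∃ i, r i j}, ?_, ?_⟩
  · rintro x ⟨i, hix⟩ y ⟨j, hjy⟩ ⟨-, hxy | hyx⟩
    · exact hr ⟨i, x, y, hix, hxy⟩
    · exact hr ⟨j, y, x, hjy, hyx⟩
  · rintro x hx y hy ⟨-, hxy | hyx⟩
    · exact hy ⟨x, hxy⟩
    · exact hx ⟨y, hyx⟩

theorem fromRel_adj_of_rel [Std.Irrefl r] {i j : α} (hij : r i j) :
    (SimpleGraph.fromRel r).Adj i j :=
  ⟨ne_of_irrefl hij, Or.inl hij⟩

theorem bipartite_permutation_graphs_general [IsStrictOrder α r] {V : Type*} {G : SimpleGraph V}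
    (e : G ≃g SimpleGraph.fromRel r) :
    List.TFAE [IsBipartiteGraph G,
      ¬ ∃ a b c : V, G.Adj a b ∧ G.Adj b c ∧ G.Adj a c,
      ¬ ∃ i j k, r i j ∧ r j k] := by
  tfae_have 1 → 2 := IsBipartiteGraph.not_exists_triangle
  tfae_have 2 → 3 := by
    rintro triangle_free ⟨i, j, k, hij, hjk⟩
    have adj_of_rel {x y : α} (hxy : r x y) : G.Adj (e.symm x) (e.symm y) :=
      e.symm.map_adj_iff.2 (fromRel_adj_of_rel hxy)
    exact triangle_free
      ⟨e.symm i, e.symm j, e.symm k, adj_of_rel hij, adj_of_rel hjk,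
        adj_of_rel (_root_.trans hij hjk)⟩
  tfae_have 3 → 1 := fun hr => (isBipartiteGraph_fromRel_of_not_exists_chain hr).of_hom e.toHom
  tfae_finish

end ComparabilityGraph

/-- The inversion relation of a map `f` between ordered types: the positions `i < j` carry values
in the opposite order. Positions rather than values are related, so that `permGraph π` is by
definition `SimpleGraph.fromRel (IsInversion π)`. -/
def IsInversion {α β : Type*} [Preorder α] [Preorder β] (f : α → β) (i j : α) : Prop :=
  i < j ∧ f j < f i

instance IsInversion.isStrictOrder {α β : Type*} [Preorder α] [Preorder β] (f : α → β) :
    IsStrictOrder α (IsInversion f) where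
  irrefl _ h := lt_irrefl _ h.1
  trans _ _ _ hij hjk := ⟨hij.1.trans hjk.1, hjk.2.trans hij.2⟩

theorem avoids321_iff_not_exists_isInversion_chain {n : ℕ} {π : Equiv.Perm (Fin n)} :
    Avoids321 π ↔ ¬ ∃ i j k, IsInversion π i j ∧ IsInversion π j k := by
  unfold Avoids321 IsInversion
  grind

theorem isBipartiteGraph_tfae_of_iso_permGraph {n : ℕ} {π : Equiv.Perm (Fin n)} {V : Type*}
    {G : SimpleGraph V} (e : G ≃g permGraph π) :
    List.TFAE [IsBipartiteGraph G,
      ¬ ∃ a b c : V, G.Adj a b ∧ G.Adj b c ∧ G.Adj a c,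
      Avoids321 π] := by
  rw [avoids321_iff_not_exists_isInversion_chain]
  exact bipartite_permutation_graphs_general (r := IsInversion π) e

/-- `G_π` is bipartite iff `π` is 321-avoiding; consequently, a permutation graph is
bipartite iff it is triangle-free, iff it is the permutation graph of a 321-avoiding
permutation. -/
theorem bipartite_permutation_graphs :
    (∀ (n : ℕ) (π : Equiv.Perm (Fin n)),
        IsBipartiteGraph (permGraph π) ↔ Avoids321 π) ∧
    (∀ (V : Type) [Fintype V] (G : SimpleGraph V), IsPermutationGraph G →
        (IsBipartiteGraph G ↔
          ¬ ∃ a b c : V, G.Adj a b ∧ G.Adj b c ∧ G.Adj a c)) ∧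
    (∀ (V : Type) [Fintype V] (G : SimpleGraph V), IsPermutationGraph G →
        (IsBipartiteGraph G ↔
          ∃ (n : ℕ) (π : Equiv.Perm (Fin n)),
            Avoids321 π ∧ Nonempty (G ≃g permGraph π))) := by
  refine ⟨fun n π => (isBipartiteGraph_tfae_of_iso_permGraph SimpleGraph.Iso.refl).out 0 2, ?_, ?_⟩
  · rintro V _ G ⟨n, π, ⟨e⟩⟩
    exact (isBipartiteGraph_tfae_of_iso_permGraph e).out 0 1
  · rintro V _ G ⟨n, π, ⟨e⟩⟩
    constructor
    · intro hG
      exact ⟨n, π, ((isBipartiteGraph_tfae_of_iso_permGraph e).out 0 2).1 hG, ⟨e⟩⟩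
    · rintro ⟨m, σ, hσ, ⟨f⟩⟩
      exact ((isBipartiteGraph_tfae_of_iso_permGraph f).out 0 2).2 hσ
end

section
/- Every 321-avoiding permutation of length n ≥ 2 is obtained in exactly one way from a 321-avoiding permutation σ of length n−1 by one of the following two operations: (a) inserting the new value n into σ at a position strictly to the right of the position of the value n−1 in σ; or (b) replacing the value n−1 in σ by n and appending the value n−1 at the right end. Moreover, every permutation produced from a 321-avoiding σ of length n−1 by operation (a) or (b) is 321-avoiding. -/
/-- Operation (a): `π` (of length `m+2`) is obtained from `σ` (of length `m+1`) by
inserting the new largest value at position `p`, which lies strictly to the right of the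
position of the largest value of `σ`.  (Values and positions are 0-indexed, so the
largest value of `σ` is `Fin.last m` and the inserted value is `Fin.last (m+1)`.) -/
def ResultA (m : ℕ) (σ : Equiv.Perm (Fin (m + 1))) (p : Fin (m + 2))
    (π : Equiv.Perm (Fin (m + 2))) : Prop :=
  ((σ.symm (Fin.last m) : ℕ) < (p : ℕ)) ∧
  π p = Fin.last (m + 1) ∧
  (∀ i : Fin (m + 1), (i : ℕ) < (p : ℕ) → (π i.castSucc : ℕ) = (σ i : ℕ)) ∧
  (∀ i : Fin (m + 1), (p : ℕ) ≤ (i : ℕ) → (π i.succ : ℕ) = (σ i : ℕ))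

/-- Operation (b): `π` (of length `m+2`) is obtained from `σ` (of length `m+1`) by
replacing the largest value of `σ` by the new largest value and appending the old
largest value at the right end. -/
def ResultB (m : ℕ) (σ : Equiv.Perm (Fin (m + 1)))
    (π : Equiv.Perm (Fin (m + 2))) : Prop :=
  ((π (Fin.last (m + 1)) : ℕ) = m) ∧
  (∀ i : Fin (m + 1),
    (π i.castSucc : ℕ) = if σ i = Fin.last m then m + 1 else (σ i : ℕ))

/-!
Both operations insert a single point into the diagram of `σ`: (a) a point of maximal value at
position `p`, (b) a point of value `n - 1` in the last position. Deleting the point recovers `σ`,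
and deletion preserves 321-avoidance.

In a 321-avoider the entries to the right of the maximum increase, so a point inserted as in (a)
is never the `3` of a pattern; a point inserted as in (b) could only be the `1` of a pattern, but
just one value lies above it. Conversely, operation (a) produces exactly the permutations in which
`n - 1` precedes `n`, while in a 321-avoider in which `n` precedes `n - 1` nothing can follow
`n - 1`, so it arises from (b).
-/

open Equiv (Perm)

section InsertPoint

variable {n : ℕ}

/-- The permutation whose diagram is that of `σ` with the point `(q, v)` added: positions from `q`
on and values from `v` on are shifted up by one. -/
def insertPoint (q v : Fin (n + 1)) (σ : Perm (Fin n)) : Perm (Fin (n + 1)) :=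
  (finSuccEquiv' q).trans (σ.optionCongr.trans (finSuccEquiv' v).symm)

variable {q v : Fin (n + 1)} {σ : Perm (Fin n)} {π : Perm (Fin (n + 1))}

@[simp]
theorem insertPoint_self : insertPoint q v σ q = v := by
  simp [insertPoint]

@[simp]
theorem insertPoint_succAbove (i : Fin n) :
    insertPoint q v σ (q.succAbove i) = v.succAbove (σ i) := by
  simp [insertPoint]

theorem eq_insertPoint_iff :
    π = insertPoint q v σ ↔ π q = v ∧ ∀ i, π (q.succAbove i) = v.succAbove (σ i) := by
  rw [Equiv.ext_iff, Fin.forall_iff_succAbove q]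
  simp only [insertPoint_self, insertPoint_succAbove]

theorem insertPoint_injective (q v : Fin (n + 1)) : Function.Injective (insertPoint q v) := by
  intro σ τ h
  ext1 i
  apply v.succAbove_right_injective
  rw [← insertPoint_succAbove (q := q), h, insertPoint_succAbove]

theorem exists_eq_insertPoint (h : π q = v) : ∃ σ, π = insertPoint q v σ := by
  have apply_ne (i : Fin n) : π (q.succAbove i) ≠ v := fun hi ↦
    q.succAbove_ne i (π.injective (hi.trans h.symm))
  choose f hf using fun i ↦ Fin.exists_succAbove_eq (apply_ne i)
  have f_injective : Function.Injective f := fun i j hij ↦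
    q.succAbove_right_injective (π.injective (by rw [← hf i, ← hf j, hij]))
  exact ⟨.ofBijective f (Finite.injective_iff_bijective.mp f_injective),
    eq_insertPoint_iff.mpr ⟨h, fun i ↦ (hf i).symm⟩⟩

end InsertPoint

namespace Avoids321

variable {n : ℕ} {q v : Fin (n + 1)} {σ : Perm (Fin n)}

theorem apply_lt_apply (hσ : Avoids321 σ) {i j k : Fin n} (hij : i < j) (hjk : j < k)
    (hdesc : σ j < σ i) : σ j < σ k := by
  by_contra! hkj
  exact hσ ⟨i, j, k, hij, hjk, hkj.lt_of_ne (σ.injective.ne hjk.ne'), hdesc⟩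

theorem of_insertPoint (h : Avoids321 (insertPoint q v σ)) : Avoids321 σ := by
  rintro ⟨i, j, k, hij, hjk, hkj, hji⟩
  exact h ⟨q.succAbove i, q.succAbove j, q.succAbove k, by simpa, by simpa, by simpa, by simpa⟩

theorem insertPoint_last_value (hσ : Avoids321 σ)
    (hq : ∀ j k, q ≤ j.castSucc → j < k → σ j < σ k) :
    Avoids321 (insertPoint q (Fin.last n) σ) := by
  rintro ⟨i, j, k, hij, hjk, hkj, hji⟩
  obtain rfl | ⟨k, rfl⟩ := q.eq_self_or_eq_succAbove k
  · simp [(Fin.le_last _).not_gt] at hkj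
  obtain rfl | ⟨j, rfl⟩ := q.eq_self_or_eq_succAbove j
  · simp [(Fin.le_last _).not_gt] at hji
  rw [Fin.succAbove_lt_succAbove_iff] at hjk
  simp only [insertPoint_succAbove, Fin.succAbove_lt_succAbove_iff] at hkj
  obtain rfl | ⟨i, rfl⟩ := q.eq_self_or_eq_succAbove i
  · exact hkj.asymm (hq j k (Fin.lt_succAbove_iff_le_castSucc _ _ |>.mp hij) hjk)
  · exact hσ ⟨i, j, k, by simpa using hij, hjk, hkj, by simpa using hji⟩

theorem insertPoint_last_position (hσ : Avoids321 σ)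
    (hv : ∀ i j, i < j → v ≤ (σ j).castSucc → σ i < σ j) :
    Avoids321 (insertPoint (Fin.last n) v σ) := by
  rintro ⟨i, j, k, hij, hjk, hkj, hji⟩
  obtain ⟨j, rfl⟩ := Fin.exists_succAbove_eq (hjk.trans_le k.le_last).ne
  obtain ⟨i, rfl⟩ := Fin.exists_succAbove_eq (hij.trans (hjk.trans_le k.le_last)).ne
  rw [Fin.succAbove_lt_succAbove_iff] at hij
  simp only [insertPoint_succAbove, Fin.succAbove_lt_succAbove_iff] at hji
  obtain rfl | ⟨k, rfl⟩ := (Fin.last n).eq_self_or_eq_succAbove k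
  · rw [insertPoint_self, insertPoint_succAbove, Fin.lt_succAbove_iff_le_castSucc] at hkj
    exact hji.asymm (hv i j hij hkj)
  · simp only [insertPoint_succAbove, Fin.succAbove_lt_succAbove_iff] at hkj
    exact hσ ⟨i, j, k, hij, by simpa using hjk, hkj, hji⟩

theorem apply_last_eq_of_symm_last_lt {m : ℕ} {π : Perm (Fin (m + 2))} (hπ : Avoids321 π)
    (h : π.symm (Fin.last (m + 1)) < π.symm (Fin.last m).castSucc) :
    π (Fin.last (m + 1)) = (Fin.last m).castSucc := by
  rw [← Equiv.eq_symm_apply]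
  by_contra hne
  have hlt : π.symm (Fin.last m).castSucc < Fin.last (m + 1) :=
    Fin.lt_last_iff_ne_last.mpr (Ne.symm hne)
  have hvalue : (Fin.last m).castSucc < π (Fin.last (m + 1)) := by
    simpa using hπ.apply_lt_apply h hlt (by simp [Fin.castSucc_lt_last])
  have hmax : π (Fin.last (m + 1)) = Fin.last (m + 1) := by
    simpa [Fin.castSucc_lt_iff_succ_le] using hvalue
  rw [← Equiv.eq_symm_apply] at hmax
  exact (h.trans hlt).ne hmax.symm

end Avoids321

section Operations

variable {m : ℕ} {σ τ : Perm (Fin (m + 1))} {p q : Fin (m + 2)} {π : Perm (Fin (m + 2))}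

theorem resultA_iff : ResultA m σ p π ↔
    (σ.symm (Fin.last m)).castSucc < p ∧ π = insertPoint p (Fin.last (m + 1)) σ := by
  rw [eq_insertPoint_iff]
  refine and_congr_right fun _ ↦ and_congr_right fun _ ↦ ?_
  rw [← forall_and]
  refine forall_congr' fun i ↦ ?_
  obtain hi | hi := lt_or_ge i.castSucc p
  · have hi' : (i : ℕ) < p := hi
    simp [Fin.succAbove_of_castSucc_lt _ _ hi, Fin.ext_iff, hi', hi'.not_ge]
  · have hi' : (p : ℕ) ≤ i := hi
    simp [Fin.succAbove_of_le_castSucc _ _ hi, Fin.ext_iff, hi', hi'.not_gt]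

theorem val_succAbove_castSucc_last (x : Fin (m + 1)) :
    ((Fin.last m).castSucc.succAbove x : ℕ) = if x = Fin.last m then m + 1 else (x : ℕ) := by
  split_ifs with hx
  · simp [hx]
  · simp [Fin.succAbove_of_castSucc_lt, Fin.lt_last_iff_ne_last.mpr hx]

theorem resultB_iff :
    ResultB m σ π ↔ π = insertPoint (Fin.last (m + 1)) (Fin.last m).castSucc σ := by
  simp only [eq_insertPoint_iff, ResultB, Fin.ext_iff, val_succAbove_castSucc_last,
    Fin.succAbove_last, Fin.val_castSucc, Fin.val_last]

theorem symm_insertPoint_last_lt_iff :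
    (insertPoint p (Fin.last (m + 1)) σ).symm (Fin.last m).castSucc < p ↔
      (σ.symm (Fin.last m)).castSucc < p := by
  have hpos : (insertPoint p (Fin.last (m + 1)) σ).symm (Fin.last m).castSucc =
      p.succAbove (σ.symm (Fin.last m)) := by
    simp [Equiv.symm_apply_eq]
  rw [hpos, Fin.succAbove_lt_iff_castSucc_lt]

namespace ResultA

theorem apply_eq_last (h : ResultA m σ p π) : π p = Fin.last (m + 1) := h.2.1

theorem symm_lt_symm (h : ResultA m σ p π) :
    π.symm (Fin.last m).castSucc < π.symm (Fin.last (m + 1)) := by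
  rw [← h.apply_eq_last, π.symm_apply_apply]
  obtain ⟨hp, rfl⟩ := resultA_iff.mp h
  exact symm_insertPoint_last_lt_iff.mpr hp

theorem unique (hσ : ResultA m σ p π) (hτ : ResultA m τ q π) : σ = τ ∧ p = q := by
  obtain rfl : p = q := π.injective (hσ.apply_eq_last.trans hτ.apply_eq_last.symm)
  have hins := (resultA_iff.mp hσ).2.symm.trans (resultA_iff.mp hτ).2
  exact ⟨insertPoint_injective _ _ hins, rfl⟩

theorem avoids321_iff (h : ResultA m σ p π) : Avoids321 π ↔ Avoids321 σ := by
  obtain ⟨hp, rfl⟩ := resultA_iff.mp h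
  refine ⟨.of_insertPoint, fun hσ ↦ hσ.insertPoint_last_value fun j k hpj hjk ↦ ?_⟩
  have hmax : σ.symm (Fin.last m) < j := Fin.castSucc_lt_castSucc_iff.mp (hp.trans_le hpj)
  refine hσ.apply_lt_apply hmax hjk ?_
  rw [σ.apply_symm_apply, Fin.lt_last_iff_ne_last, Ne, ← Equiv.eq_symm_apply]
  exact hmax.ne'

end ResultA

theorem exists_resultA (h : π.symm (Fin.last m).castSucc < π.symm (Fin.last (m + 1))) :
    ∃ σ, ResultA m σ (π.symm (Fin.last (m + 1))) π := by
  obtain ⟨σ, hσ⟩ := exists_eq_insertPoint (π.apply_symm_apply (Fin.last (m + 1)))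
  refine ⟨σ, resultA_iff.mpr ⟨symm_insertPoint_last_lt_iff.mp ?_, hσ⟩⟩
  rwa [← hσ]

theorem existsUnique_resultA (h : (σ.symm (Fin.last m)).castSucc < p) :
    ∃! π, ResultA m σ p π := by
  simp only [resultA_iff, h, true_and, existsUnique_eq]

namespace ResultB

theorem apply_last (h : ResultB m σ π) : π (Fin.last (m + 1)) = (Fin.last m).castSucc :=
  Fin.ext h.1

theorem symm_lt_symm (h : ResultB m σ π) :
    π.symm (Fin.last (m + 1)) < π.symm (Fin.last m).castSucc := by
  rw [← h.apply_last, π.symm_apply_apply, Fin.lt_last_iff_ne_last, Ne, Equiv.symm_apply_eq,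
    h.apply_last]
  exact (Fin.castSucc_ne_last _).symm

theorem unique (hσ : ResultB m σ π) (hτ : ResultB m τ π) : σ = τ :=
  insertPoint_injective _ _ ((resultB_iff.mp hσ).symm.trans (resultB_iff.mp hτ))

theorem avoids321_iff (h : ResultB m σ π) : Avoids321 π ↔ Avoids321 σ := by
  obtain rfl := resultB_iff.mp h
  refine ⟨.of_insertPoint, fun hσ ↦ hσ.insertPoint_last_position fun i j hij hj ↦ ?_⟩
  have hmax : σ j = Fin.last m := Fin.last_le_iff.mp (Fin.castSucc_le_castSucc_iff.mp hj)
  rw [hmax, Fin.lt_last_iff_ne_last, ← hmax]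
  exact σ.injective.ne hij.ne

end ResultB

theorem exists_resultB (hπ : Avoids321 π)
    (h : π.symm (Fin.last (m + 1)) < π.symm (Fin.last m).castSucc) : ∃ σ, ResultB m σ π := by
  simpa only [resultB_iff] using exists_eq_insertPoint (hπ.apply_last_eq_of_symm_last_lt h)

theorem existsUnique_resultB (σ : Perm (Fin (m + 1))) : ∃! π, ResultB m σ π := by
  simp only [resultB_iff, existsUnique_eq]

end Operations

/-- Every 321-avoiding permutation of length `m+2` arises in exactly one way from a
321-avoiding permutation of length `m+1` by operation (a) (at a valid position) or
operation (b); moreover both operations are well defined on 321-avoiding permutations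
and always produce 321-avoiding permutations.  A pair `(σ, some p)` encodes operation
(a) at insertion position `p`, and `(σ, none)` encodes operation (b). -/
theorem generation_of_321_avoiders (m : ℕ) :
    (∀ σ : Equiv.Perm (Fin (m + 1)), Avoids321 σ →
      (∀ (p : Fin (m + 2)) (π : Equiv.Perm (Fin (m + 2))),
          ResultA m σ p π → Avoids321 π) ∧
      (∀ π : Equiv.Perm (Fin (m + 2)), ResultB m σ π → Avoids321 π) ∧
      (∀ p : Fin (m + 2), (σ.symm (Fin.last m) : ℕ) < (p : ℕ) →
          ∃! π : Equiv.Perm (Fin (m + 2)), ResultA m σ p π) ∧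
      (∃! π : Equiv.Perm (Fin (m + 2)), ResultB m σ π)) ∧
    (∀ π : Equiv.Perm (Fin (m + 2)), Avoids321 π →
      ∃! w : Equiv.Perm (Fin (m + 1)) × Option (Fin (m + 2)),
        Avoids321 w.1 ∧
          (match w.2 with
            | some p => ResultA m w.1 p π
            | none => ResultB m w.1 π)) := by
  refine ⟨fun σ hσ ↦ ⟨fun p π h ↦ h.avoids321_iff.mpr hσ, fun π h ↦ h.avoids321_iff.mpr hσ,
    fun p hp ↦ existsUnique_resultA hp, existsUnique_resultB σ⟩, fun π hπ ↦ ?_⟩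
  have hne : π.symm (Fin.last m).castSucc ≠ π.symm (Fin.last (m + 1)) :=
    π.symm.injective.ne (Fin.castSucc_ne_last _)
  obtain hlt | hlt := hne.lt_or_gt
  · obtain ⟨σ, hσ⟩ := exists_resultA hlt
    refine ⟨(σ, some _), ⟨hσ.avoids321_iff.mp hπ, hσ⟩, ?_⟩
    rintro ⟨τ, _ | p⟩ ⟨-, hτ⟩
    · exact absurd hlt (ResultB.symm_lt_symm hτ).asymm
    · obtain ⟨rfl, rfl⟩ := hσ.unique hτ
      rfl
  · obtain ⟨σ, hσ⟩ := exists_resultB hπ hlt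
    refine ⟨(σ, none), ⟨hσ.avoids321_iff.mp hπ, hσ⟩, ?_⟩
    rintro ⟨τ, _ | p⟩ ⟨-, hτ⟩
    · obtain rfl := hσ.unique hτ
      rfl
    · exact absurd hlt (ResultA.symm_lt_symm hτ).asymm
end
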